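/- arXiv:2107.10450 — 2 statements merged into one kernel-verified Lean document; each statement's English description precedes it below -/
import Mathlib

section
/- Let $k, p \ge 1$ be integers and let $\sigma > 0$. Let $G \in \mathbb{R}^{k\times p}$ be a random matrix with i.i.d. standard Gaussian $N(0,1)$ entries and let $\eta \in \mathbb{R}^k$ be a random vector with i.i.d. $N(0,\sigma^2)$ entries, where $G$ and $\eta$ are independent. Then for any constant $c_2 > 0$, $$\Pr\left( \|G^\top\eta\|_2 < 2\sigma c_2\sqrt{kp} \right) \ge 1 - 2p\exp(-2k) - p\exp\left(-\frac{c_2^2}{2}\right),$$ where $\|\cdot\|_2$ denotes the Euclidean norm on $\mathbb{R}^p$. -/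
open MeasureTheory ProbabilityTheory
open scoped Matrix
open scoped NNReal ENNReal

/-!
Let `g` be a column of `G`. Given `η`, the inner product `⟨g, η⟩` is a centered Gaussian of variance
`‖η‖²`, so `ℙ(s ≤ |⟨g, η⟩| | η) ≤ exp (-s² / (2 ‖η‖²)) ≤ exp (-l s + l² ‖η‖² / 2)` for every `l`.
The usual factor `2` of a two-sided tail bound has to be avoided here, as it is too much for small
`c₂`. Integrating over `η` with the moment generating function of a squared Gaussian yields
`ℙ(s ≤ |⟨g, η⟩|) ≤ exp (-l s + k l² σ²)` as long as `l² σ² ≤ 1 / 2`. For `s = 2 σ c₂ √k` a suitable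
`l` makes this at most `exp (-min (2 k) (c₂² / 2))`. A union bound over the `p` columns concludes.

Splitting on the event `‖η‖ < 2 σ √k` instead does not work: its complement has probability
of exponential order `exp (-(3 - log 4) k / 2)`, which exceeds `2 exp (-2 k)` for large `k`.
-/

section GaussianTail

variable {v : ℝ≥0} {s : ℝ}

lemma gaussianReal_neg_apply_Ioi_zero_le (hv : v ≠ 0) (hs : 0 ≤ s) :
    gaussianReal (-s) v (Set.Ioi 0) ≤
      ENNReal.ofReal (Real.exp (-s ^ 2 / (2 * v))) * gaussianReal 0 v (Set.Ioi 0) := by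
  rw [gaussianReal_apply _ hv, gaussianReal_apply _ hv,
    ← lintegral_const_mul _ (measurable_gaussianPDF 0 v)]
  refine setLIntegral_mono (by fun_prop) fun x hx => ?_
  rw [gaussianPDF, gaussianPDF, ← ENNReal.ofReal_mul (by positivity)]
  refine ENNReal.ofReal_le_ofReal ?_
  rw [gaussianPDFReal, gaussianPDFReal, mul_left_comm, ← Real.exp_add, ← add_div]
  gcongr
  nlinarith [mul_nonneg hs (Set.mem_Ioi.1 hx).le]

lemma gaussianReal_zero_apply_Ioi_le (hv : v ≠ 0) (hs : 0 ≤ s) :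
    gaussianReal 0 v (Set.Ioi s) ≤
      ENNReal.ofReal (Real.exp (-s ^ 2 / (2 * v))) * gaussianReal 0 v (Set.Ioi 0) := by
  have hshift : gaussianReal (-s) v (Set.Ioi 0) = gaussianReal 0 v (Set.Ioi s) := by
    rw [← zero_sub, ← gaussianReal_map_sub_const,
      Measure.map_apply (by fun_prop) measurableSet_Ioi]
    simp
  exact hshift ▸ gaussianReal_neg_apply_Ioi_zero_le hv hs

lemma gaussianReal_zero_apply_Iio_neg (v : ℝ≥0) (s : ℝ) :
    gaussianReal 0 v (Set.Iio (-s)) = gaussianReal 0 v (Set.Ioi s) := by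
  conv_lhs => rw [← neg_zero, ← gaussianReal_map_neg]
  rw [Measure.map_apply (by fun_prop) measurableSet_Iio]
  simp

lemma gaussianReal_zero_le_abs_eq (hv : v ≠ 0) (hs : 0 ≤ s) :
    gaussianReal 0 v {x | s ≤ |x|} = 2 * gaussianReal 0 v (Set.Ioi s) := by
  have := nullSingletonClass_gaussianReal (μ := 0) hv
  have hset : {x : ℝ | s ≤ |x|} = Set.Ici s ∪ Set.Iic (-s) := by
    ext x
    simp [le_abs, le_neg]
  have hdisj : Disjoint (Set.Ioi s) (Set.Iio (-s)) :=
    Set.Ioi_disjoint_Iio_of_le (neg_le_self hs)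
  rw [hset, ← measure_congr (Ioi_ae_eq_Ici.union Iio_ae_eq_Iic),
    measure_union hdisj measurableSet_Iio, gaussianReal_zero_apply_Iio_neg, two_mul]

lemma gaussianReal_zero_le_abs_le (hv : v ≠ 0) (hs : 0 ≤ s) :
    gaussianReal 0 v {x | s ≤ |x|} ≤ ENNReal.ofReal (Real.exp (-s ^ 2 / (2 * v))) :=
  calc gaussianReal 0 v {x | s ≤ |x|}
      = 2 * gaussianReal 0 v (Set.Ioi s) := gaussianReal_zero_le_abs_eq hv hs
    _ ≤ 2 * (ENNReal.ofReal (Real.exp (-s ^ 2 / (2 * v))) * gaussianReal 0 v (Set.Ioi 0)) := by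
        gcongr
        exact gaussianReal_zero_apply_Ioi_le hv hs
    _ = ENNReal.ofReal (Real.exp (-s ^ 2 / (2 * v))) * gaussianReal 0 v {x | 0 ≤ |x|} := by
        rw [gaussianReal_zero_le_abs_eq hv le_rfl, mul_left_comm]
    _ ≤ ENNReal.ofReal (Real.exp (-s ^ 2 / (2 * v))) := mul_le_of_le_one_right' prob_le_one

lemma gaussianReal_zero_le_abs_le_exp (v : ℝ≥0) (hs : 0 ≤ s) (l : ℝ) :
    gaussianReal 0 v {x | s ≤ |x|} ≤ ENNReal.ofReal (Real.exp (-l * s + l ^ 2 / 2 * v)) := by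
  rcases eq_or_ne v 0 with rfl | hv
  · rcases hs.eq_or_lt with rfl | hs_pos
    · simp
    · simp [gaussianReal_zero_var, hs_pos]
  · refine (gaussianReal_zero_le_abs_le hv hs).trans (ENNReal.ofReal_le_ofReal ?_)
    rw [Real.exp_le_exp, div_le_iff₀ (by positivity)]
    nlinarith [sq_nonneg (s - l * v)]

end GaussianTail

lemma hasLaw_sum_gaussianReal {Ω ι : Type*} [MeasurableSpace Ω] [Fintype ι] {P : Measure Ω}
    {X : ι → Ω → ℝ} {m : ι → ℝ} {v : ι → ℝ≥0}
    (hX : ∀ i, HasLaw (X i) (gaussianReal (m i) (v i)) P) (hindep : iIndepFun X P) :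
    HasLaw (fun ω => ∑ i, X i ω) (gaussianReal (∑ i, m i) (∑ i, v i)) P := by
  have := hindep.isProbabilityMeasure
  have hX_meas : ∀ i, AEMeasurable (X i) P := fun i => (hX i).aemeasurable
  have hsum_meas : AEMeasurable (fun ω => ∑ i, X i ω) P := by fun_prop
  have := Measure.isProbabilityMeasure_map hsum_meas
  refine ⟨hsum_meas, Measure.ext_of_charFun ?_⟩
  rw [hindep.charFun_map_fun_sum_eq_prod hX_meas]
  ext t
  simp only [Finset.prod_apply, fun i => (hX i).map_eq, charFun_gaussianReal, ← Complex.exp_sum]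
  simp [Finset.sum_sub_distrib, Finset.sum_div, Finset.sum_mul, Finset.mul_sum]

lemma hasLaw_sum_mul_gaussianReal {Ω ι : Type*} [MeasurableSpace Ω] [Fintype ι] {P : Measure Ω}
    {X : ι → Ω → ℝ} (hX : ∀ i, HasLaw (X i) (gaussianReal 0 1) P) (hindep : iIndepFun X P)
    (y : ι → ℝ) :
    HasLaw (fun ω => ∑ i, X i ω * y i) (gaussianReal 0 (∑ i, ‖y i‖₊ ^ 2)) P := by
  have hlaw : ∀ i, HasLaw (fun ω => X i ω * y i) (gaussianReal 0 (‖y i‖₊ ^ 2)) P := by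
    intro i
    convert gaussianReal_mul_const (hX i) (y i) using 2
    · simp
    · ext
      simp
  simpa using hasLaw_sum_gaussianReal hlaw (hindep.comp (fun i x => x * y i) fun i => by fun_prop)

lemma lintegral_exp_mul_sq_gaussianReal {v : ℝ≥0} {b : ℝ} (hb : 2 * b * v < 1) :
    ∫⁻ x, ENNReal.ofReal (Real.exp (b * x ^ 2)) ∂gaussianReal 0 v =
      ENNReal.ofReal (√(1 - 2 * b * v))⁻¹ := by
  rcases eq_or_ne v 0 with rfl | hv
  · simp [gaussianReal_zero_var]
  have hrate : 0 < 1 / (2 * v) - b := by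
    rw [sub_pos, lt_div_iff₀ (by positivity)]
    linarith
  have hdensity : ∀ x : ℝ, (gaussianPDF 0 v * fun x => ENNReal.ofReal (Real.exp (b * x ^ 2))) x =
      ENNReal.ofReal ((√(2 * Real.pi * v))⁻¹ * Real.exp (-(1 / (2 * v) - b) * x ^ 2)) := by
    intro x
    rw [Pi.mul_apply, gaussianPDF, ← ENNReal.ofReal_mul (gaussianPDFReal_nonneg _ _ _),
      gaussianPDFReal, mul_assoc, ← Real.exp_add]
    congr 3
    ring
  have hratio : (2 * Real.pi * v)⁻¹ * (Real.pi / (1 / (2 * v) - b)) = (1 - 2 * b * v)⁻¹ := by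
    have : 1 / (2 * v) - b = (1 - 2 * b * v) / (2 * v) := by field_simp
    rw [this]
    field_simp
  rw [gaussianReal_of_var_ne_zero _ hv, lintegral_withDensity_eq_lintegral_mul _
    (measurable_gaussianPDF 0 v) (by fun_prop)]
  simp_rw [hdensity]
  rw [← ofReal_integral_eq_lintegral_ofReal ((integrable_exp_neg_mul_sq hrate).const_mul _)
    (ae_of_all _ fun x => by positivity), integral_const_mul, integral_gaussian,
    ← Real.sqrt_inv, ← Real.sqrt_inv, ← Real.sqrt_mul (by positivity), hratio]

lemma inv_sqrt_one_sub_le_exp {u : ℝ} (hu₀ : 0 ≤ u) (hu : u ≤ 1 / 2) :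
    (√(1 - u))⁻¹ ≤ Real.exp u := by
  rw [← Real.sqrt_inv]
  refine Real.sqrt_le_iff.2 ⟨(Real.exp_pos _).le, ?_⟩
  calc (1 - u)⁻¹ ≤ 2 * u + 1 := by
        rw [inv_le_iff_one_le_mul₀ (by linarith)]
        nlinarith
    _ ≤ Real.exp (2 * u) := Real.add_one_le_exp _
    _ = Real.exp u ^ 2 := by rw [← Real.exp_nat_mul, Nat.cast_ofNat]

lemma lintegral_prod_comp_eq_prod_lintegral {Ω ι : Type*} [MeasurableSpace Ω] [Fintype ι]
    {P : Measure Ω} {α : ι → Type*} [∀ i, MeasurableSpace (α i)] {μ : ∀ i, Measure (α i)}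
    [∀ i, IsProbabilityMeasure (μ i)] {X : ∀ i, Ω → α i} (hX : ∀ i, HasLaw (X i) (μ i) P)
    (hindep : iIndepFun X P) {f : ∀ i, α i → ℝ≥0∞} (hf : ∀ i, Measurable (f i)) :
    ∫⁻ ω, ∏ i, f i (X i ω) ∂P = ∏ i, ∫⁻ x, f i x ∂μ i := by
  have hf_eval (i : ι) : Measurable fun x : ∀ i, α i => f i (x i) :=
    (hf i).comp (measurable_pi_apply i)
  calc ∫⁻ ω, ∏ i, f i (X i ω) ∂P
      = ∫⁻ x, ∏ i, f i (x i) ∂Measure.pi μ :=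
        (hindep.hasLaw_pi hX).lintegral_comp
          (Finset.univ.measurable_fun_prod fun i _ => hf_eval i).aemeasurable
    _ = ∏ i, ∫⁻ x, f i (x i) ∂Measure.pi μ :=
        lintegral_prod_eq_prod_lintegral_of_indepFun _ (fun i (x : ∀ i, α i) => f i (x i))
          (iIndepFun_pi (X := f) fun i => (hf i).aemeasurable) hf_eval
    _ = ∏ i, ∫⁻ x, f i x ∂μ i :=
        Finset.prod_congr rfl fun i _ => (measurePreserving_eval μ i).lintegral_comp (hf i)

lemma measure_prodMk_mem_eq_lintegral {Ω α β : Type*} [MeasurableSpace Ω] [MeasurableSpace α]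
    [MeasurableSpace β] {P : Measure Ω} [IsFiniteMeasure P] {X : Ω → α} {Y : Ω → β}
    (hX : AEMeasurable X P) (hY : AEMeasurable Y P) (hXY : IndepFun X Y P)
    {S : Set (α × β)} (hS : MeasurableSet S) :
    P {ω | (X ω, Y ω) ∈ S} = ∫⁻ ω, P {ω' | (X ω', Y ω) ∈ S} ∂P := by
  have hslice : ∀ y, P.map X ((fun x => (x, y)) ⁻¹' S) = P {ω | (X ω, y) ∈ S} := fun y =>
    Measure.map_apply_of_aemeasurable hX (measurable_prodMk_right hS)
  calc P {ω | (X ω, Y ω) ∈ S}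
      = P.map (fun ω => (X ω, Y ω)) S :=
        (Measure.map_apply_of_aemeasurable (hX.prodMk hY) hS).symm
    _ = ∫⁻ y, P.map X ((fun x => (x, y)) ⁻¹' S) ∂P.map Y := by
        rw [hXY.map_prod_eq_prod_map_map hX hY, Measure.prod_apply_symm hS]
    _ = ∫⁻ ω, P {ω' | (X ω', Y ω) ∈ S} ∂P := by
        rw [lintegral_map' (measurable_measure_prodMk_right hS).aemeasurable hY]
        simp_rw [hslice]

lemma one_sub_sum_measureReal_compl_le {Ω κ : Type*} [MeasurableSpace Ω] [Fintype κ]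
    {P : Measure Ω} [IsProbabilityMeasure P] {A : Set Ω} {B : κ → Set Ω} (h : ⋂ j, B j ⊆ A) :
    1 - ∑ j, P.real (B j)ᶜ ≤ P.real A := by
  rw [sub_le_iff_le_add]
  calc (1 : ℝ) = P.real (A ∪ Aᶜ) := by rw [Set.union_compl_self, probReal_univ]
    _ ≤ P.real A + P.real Aᶜ := measureReal_union_le _ _
    _ ≤ P.real A + P.real (⋃ j, (B j)ᶜ) := by
        gcongr
        exacts [measure_ne_top _ _, Set.compl_iInter B ▸ Set.compl_subset_compl.2 h]
    _ ≤ P.real A + ∑ j, P.real (B j)ᶜ := by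
        gcongr
        exact measureReal_iUnion_fintype_le _

lemma norm_toLp_two_lt_mul_sqrt_card {κ E : Type*} [Fintype κ] [Nonempty κ]
    [SeminormedAddCommGroup E] {x : κ → E} {t : ℝ} (hx : ∀ j, ‖x j‖ < t) :
    ‖WithLp.toLp 2 x‖ < t * √(Fintype.card κ) := by
  have ht : 0 ≤ t := (norm_nonneg _).trans (hx (Classical.arbitrary κ)).le
  rw [PiLp.norm_eq_of_L2, ← Real.sqrt_sq ht, ← Real.sqrt_mul (sq_nonneg t)]
  refine Real.sqrt_lt_sqrt (by positivity) ?_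
  calc ∑ j, ‖x j‖ ^ 2 < ∑ _j : κ, t ^ 2 :=
        Finset.sum_lt_sum_of_nonempty Finset.univ_nonempty fun j _ =>
          pow_lt_pow_left₀ (hx j) (norm_nonneg _) two_ne_zero
    _ = t ^ 2 * Fintype.card κ := by simp [mul_comm]

lemma exp_neg_min_le_two_mul_exp_add_exp (a b : ℝ) :
    Real.exp (-min a b) ≤ 2 * Real.exp (-a) + Real.exp (-b) := by
  rcases min_choice a b with h | h <;> rw [h] <;> linarith [Real.exp_pos (-a), Real.exp_pos (-b)]

lemma exists_sq_le_half_quadratic_le_neg_min {c r : ℝ} (hc : 0 ≤ c) (hr : 0 ≤ r) :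
    ∃ m : ℝ, m ^ 2 ≤ 1 / 2 ∧
      -(2 * m * c * r) + r ^ 2 * m ^ 2 ≤ -min (2 * r ^ 2) (c ^ 2 / 2) := by
  rcases le_or_gt (2 * r) c with hrc | hcr
  · refine ⟨2 / 3, by norm_num, ?_⟩
    refine le_trans ?_ (neg_le_neg (min_le_left _ _))
    nlinarith
  · have hr_pos : 0 < r := by linarith
    refine ⟨c / (3 * r), ?_, ?_⟩
    · rw [div_pow, div_le_iff₀ (by positivity)]
      nlinarith
    · refine le_trans ?_ (neg_le_neg (min_le_right _ _))
      have : -(2 * (c / (3 * r)) * c * r) + r ^ 2 * (c / (3 * r)) ^ 2 = -(5 / 9 * c ^ 2) := by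
        field_simp
        ring
      nlinarith

section InnerProduct

variable {Ω ι : Type*} [MeasurableSpace Ω] [Fintype ι] {P : Measure Ω}

lemma lintegral_exp_mul_sum_sq_le {η : Ω → ι → ℝ} {v : ℝ≥0}
    (hη_law : ∀ i, HasLaw (fun ω => η ω i) (gaussianReal 0 v) P)
    (hη_indep : iIndepFun (fun i ω => η ω i) P) {b : ℝ} (hb₀ : 0 ≤ b) (hb : 2 * b * v ≤ 1 / 2) :
    ∫⁻ ω, ENNReal.ofReal (Real.exp (b * ∑ i, η ω i ^ 2)) ∂P ≤
      ENNReal.ofReal (Real.exp (Fintype.card ι * (2 * b * v))) := by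
  let f : ℝ → ℝ≥0∞ := fun x => ENNReal.ofReal (Real.exp (b * x ^ 2))
  have hf : Measurable f := by fun_prop
  calc ∫⁻ ω, ENNReal.ofReal (Real.exp (b * ∑ i, η ω i ^ 2)) ∂P
      = ∫⁻ ω, ∏ i, f (η ω i) ∂P := by
        simp_rw [f, Finset.mul_sum, Real.exp_sum,
          ENNReal.ofReal_prod_of_nonneg fun _ _ => (Real.exp_pos _).le]
    _ = ∏ _i : ι, ∫⁻ x, f x ∂gaussianReal 0 v :=
        lintegral_prod_comp_eq_prod_lintegral hη_law hη_indep fun _ => hf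
    _ = ∏ _i : ι, ENNReal.ofReal (√(1 - 2 * b * v))⁻¹ := by
        simp_rw [f, lintegral_exp_mul_sq_gaussianReal (hb.trans_lt one_half_lt_one)]
    _ ≤ ∏ _i : ι, ENNReal.ofReal (Real.exp (2 * b * v)) := by
        gcongr
        exact inv_sqrt_one_sub_le_exp (by positivity) hb
    _ = ENNReal.ofReal (Real.exp (Fintype.card ι * (2 * b * v))) := by
        rw [Finset.prod_const, Finset.card_univ, ← ENNReal.ofReal_pow (Real.exp_pos _).le,
          ← Real.exp_nat_mul]

variable {g η : Ω → ι → ℝ}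

lemma measure_le_abs_dotProduct_le_exp {v : ℝ≥0}
    (hg_law : ∀ i, HasLaw (fun ω => g ω i) (gaussianReal 0 1) P)
    (hg_indep : iIndepFun (fun i ω => g ω i) P)
    (hη_law : ∀ i, HasLaw (fun ω => η ω i) (gaussianReal 0 v) P)
    (hη_indep : iIndepFun (fun i ω => η ω i) P)
    (hgη : IndepFun g η P) {s : ℝ} (hs : 0 ≤ s) {l : ℝ} (hl : l ^ 2 * v ≤ 1 / 2) :
    P {ω | s ≤ |g ω ⬝ᵥ η ω|} ≤
      ENNReal.ofReal (Real.exp (-l * s + Fintype.card ι * (l ^ 2 * v))) := by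
  have := hg_indep.isProbabilityMeasure
  have hg_meas : AEMeasurable g P := aemeasurable_pi_iff.2 fun i => (hg_law i).aemeasurable
  have hη_meas : AEMeasurable η P := aemeasurable_pi_iff.2 fun i => (hη_law i).aemeasurable
  have hS : MeasurableSet {z : (ι → ℝ) × (ι → ℝ) | s ≤ |z.1 ⬝ᵥ z.2|} :=
    measurableSet_le (by fun_prop) (by unfold dotProduct; fun_prop)
  have hcond : ∀ y : ι → ℝ, P {ω | s ≤ |g ω ⬝ᵥ y|} ≤
      ENNReal.ofReal (Real.exp (-l * s)) *
        ENNReal.ofReal (Real.exp (l ^ 2 / 2 * ∑ i, y i ^ 2)) := by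
    intro y
    have hlaw := (hasLaw_sum_mul_gaussianReal hg_law hg_indep y).measure_eq
      (p := fun x => s ≤ |x|) (measurableSet_le (by fun_prop) (by fun_prop))
    refine (hlaw.trans_le (gaussianReal_zero_le_abs_le_exp _ hs l)).trans_eq ?_
    rw [← ENNReal.ofReal_mul (Real.exp_pos _).le, ← Real.exp_add]
    simp
  calc P {ω | s ≤ |g ω ⬝ᵥ η ω|}
      = ∫⁻ ω, P {ω' | s ≤ |g ω' ⬝ᵥ η ω|} ∂P :=
        measure_prodMk_mem_eq_lintegral hg_meas hη_meas hgη hS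
    _ ≤ ∫⁻ ω, ENNReal.ofReal (Real.exp (-l * s)) *
          ENNReal.ofReal (Real.exp (l ^ 2 / 2 * ∑ i, η ω i ^ 2)) ∂P :=
        lintegral_mono fun ω => hcond (η ω)
    _ = ENNReal.ofReal (Real.exp (-l * s)) *
          ∫⁻ ω, ENNReal.ofReal (Real.exp (l ^ 2 / 2 * ∑ i, η ω i ^ 2)) ∂P :=
        lintegral_const_mul' _ _ ENNReal.ofReal_ne_top
    _ ≤ ENNReal.ofReal (Real.exp (-l * s)) *
          ENNReal.ofReal (Real.exp (Fintype.card ι * (2 * (l ^ 2 / 2) * v))) := by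
        gcongr
        exact lintegral_exp_mul_sum_sq_le hη_law hη_indep (by positivity) (by linarith)
    _ = ENNReal.ofReal (Real.exp (-l * s + Fintype.card ι * (l ^ 2 * v))) := by
        rw [mul_div_cancel₀ (l ^ 2) two_ne_zero, ← ENNReal.ofReal_mul (Real.exp_pos _).le,
          ← Real.exp_add]

lemma measureReal_le_abs_dotProduct_le_exp_neg_min {σ : ℝ} (hσ : 0 < σ)
    (hg_law : ∀ i, HasLaw (fun ω => g ω i) (gaussianReal 0 1) P)
    (hg_indep : iIndepFun (fun i ω => g ω i) P)
    (hη_law : ∀ i, HasLaw (fun ω => η ω i) (gaussianReal 0 (Real.toNNReal (σ ^ 2))) P)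
    (hη_indep : iIndepFun (fun i ω => η ω i) P)
    (hgη : IndepFun g η P) {c : ℝ} (hc : 0 ≤ c) :
    P.real {ω | 2 * σ * c * √(Fintype.card ι) ≤ |g ω ⬝ᵥ η ω|} ≤
      Real.exp (-min (2 * Fintype.card ι : ℝ) (c ^ 2 / 2)) := by
  set r := √(Fintype.card ι : ℝ)
  have hr_sq : r ^ 2 = Fintype.card ι := Real.sq_sqrt (Nat.cast_nonneg _)
  have hr : 0 ≤ r := Real.sqrt_nonneg _
  obtain ⟨m, hm, hexponent⟩ := exists_sq_le_half_quadratic_le_neg_min hc hr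
  have hscale : (m / σ) ^ 2 * (Real.toNNReal (σ ^ 2) : ℝ) = m ^ 2 := by
    rw [Real.coe_toNNReal _ (sq_nonneg σ)]
    field_simp
  have htail := measure_le_abs_dotProduct_le_exp hg_law hg_indep hη_law hη_indep hgη
    (s := 2 * σ * c * r) (by positivity) (l := m / σ) (hscale.trans_le hm)
  refine (ENNReal.toReal_le_of_le_ofReal (Real.exp_pos _).le htail).trans ?_
  rw [hscale, ← hr_sq, Real.exp_le_exp]
  refine Eq.trans_le ?_ hexponent
  field_simp

end InnerProduct

theorem stmt_4_general {Ω ι κ : Type*} [MeasurableSpace Ω] [Fintype ι] [Fintype κ] [Nonempty κ]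
    {P : Measure Ω} {σ : ℝ} (hσ : 0 < σ) {G : Ω → Matrix ι κ ℝ} {η : Ω → ι → ℝ}
    (hG_law : ∀ i j, HasLaw (fun ω => G ω i j) (gaussianReal 0 1) P)
    (hG_indep : ∀ j, iIndepFun (fun i ω => G ω i j) P)
    (hη_law : ∀ i, HasLaw (fun ω => η ω i) (gaussianReal 0 (Real.toNNReal (σ ^ 2))) P)
    (hη_indep : iIndepFun (fun i ω => η ω i) P)
    (hGη : ∀ j, IndepFun (fun ω i => G ω i j) η P) {c : ℝ} (hc : 0 ≤ c) :
    1 - Fintype.card κ * Real.exp (-min (2 * Fintype.card ι : ℝ) (c ^ 2 / 2)) ≤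
      P.real {ω | ‖WithLp.toLp 2 ((G ω)ᵀ *ᵥ η ω)‖ <
        2 * σ * c * √((Fintype.card ι : ℝ) * Fintype.card κ)} := by
  have := hη_indep.isProbabilityMeasure
  let B : κ → Set Ω := fun j => {ω | |((G ω)ᵀ *ᵥ η ω) j| < 2 * σ * c * √(Fintype.card ι)}
  have hB : ∀ j, P.real (B j)ᶜ ≤ Real.exp (-min (2 * Fintype.card ι : ℝ) (c ^ 2 / 2)) := by
    intro j
    simp only [B, Set.compl_ofPred, not_lt]
    exact measureReal_le_abs_dotProduct_le_exp_neg_min hσ (fun i => hG_law i j) (hG_indep j)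
      hη_law hη_indep (hGη j) hc
  calc 1 - Fintype.card κ * Real.exp (-min (2 * Fintype.card ι : ℝ) (c ^ 2 / 2))
      ≤ 1 - ∑ j, P.real (B j)ᶜ := by
        gcongr
        simpa using Finset.sum_le_card_nsmul Finset.univ _ _ fun j _ => hB j
    _ ≤ _ := one_sub_sum_measureReal_compl_le fun ω hω => by
        rw [Set.mem_ofPred_eq, Real.sqrt_mul (Nat.cast_nonneg _), ← mul_assoc]
        exact norm_toLp_two_lt_mul_sqrt_card fun j => Set.mem_iInter.1 hω j

theorem stmt_4 {Ω : Type*} [MeasurableSpace Ω] (P : Measure Ω) [IsProbabilityMeasure P]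
    (k p : ℕ) (hp : 0 < p) (σ : ℝ) (hσ : 0 < σ)
    (G : Ω → Matrix (Fin k) (Fin p) ℝ) (η : Ω → Fin k → ℝ)
    (hG_law : ∀ i j, HasLaw (fun ω => G ω i j) (gaussianReal 0 1) P)
    (hG_indep : iIndepFun (fun (ij : Fin k × Fin p) ω => G ω ij.1 ij.2) P)
    (hη_law : ∀ i, HasLaw (fun ω => η ω i) (gaussianReal 0 (Real.toNNReal (σ ^ 2))) P)
    (hη_indep : iIndepFun (fun (i : Fin k) ω => η ω i) P)
    (hGη : IndepFun (fun ω (ij : Fin k × Fin p) => G ω ij.1 ij.2) η P)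
    (c₂ : ℝ) (hc₂ : 0 < c₂) :
    P.real {ω | ‖WithLp.toLp 2 ((G ω)ᵀ *ᵥ η ω)‖ < 2 * σ * c₂ * √((k : ℝ) * (p : ℝ))} ≥
      1 - 2 * (p : ℝ) * Real.exp (-2 * (k : ℝ)) - (p : ℝ) * Real.exp (-(c₂ ^ 2) / 2) := by
  have : Nonempty (Fin p) := ⟨⟨0, hp⟩⟩
  have hcol_indep (j : Fin p) : iIndepFun (fun i ω => G ω i j) P :=
    hG_indep.precomp (g := fun i => (i, j)) fun _ _ h => (Prod.ext_iff.1 h).1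
  have hcol_η (j : Fin p) : IndepFun (fun ω i => G ω i j) η P :=
    hGη.comp (φ := fun (z : Fin k × Fin p → ℝ) i => z (i, j)) (ψ := id) (by fun_prop) measurable_id
  have hsharp := stmt_4_general hσ hG_law hcol_indep hη_law hη_indep hcol_η hc₂.le
  have hexp := exp_neg_min_le_two_mul_exp_add_exp (2 * k) (c₂ ^ 2 / 2)
  rw [Fintype.card_fin, Fintype.card_fin] at hsharp
  rw [neg_mul, neg_div]
  linear_combination hsharp + (p : ℝ) * hexp
end

section
/- There is a universal constant $C>0$ such that the following holds for all $\varepsilon,\delta\in(0,1)$. Let $G$ be a DAG on the nodes $1,\dots,n$ with parent sets $\pi_i\subseteq\{1,\dots,i-1\}$, with every in-degree $|\pi_i|$ at most $d$ and with average in-degree $d_{avg}=\frac1n\sum_i|\pi_i|$. A Gaussian Bayesian network on $G$ with coefficient vectors $A_i\in\mathbb{R}^{\pi_i}$ and noise standard deviations $\sigma_i>0$ is the law of the vector $X\in\mathbb{R}^n$ given by $X_i=\sum_{j\in\pi_i}(A_i)_jX_j+\eta_i$ with independent $\eta_i\sim N(0,\sigma_i^2)$. Let $P$ be any Gaussian Bayesian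 network on $G$. Given $$m\ \ge\ C\cdot\frac{n\cdot\max(d_{avg},1)}{\varepsilon^2}\cdot\log\frac n\delta$$ i.i.d. samples from $P$, split into a first half of $\lfloor m/2\rfloor$ and a second half of $m-\lfloor m/2\rfloor$ samples, consider the estimator that, for each node $i$, computes $\hat A_i=(X_i^\top X_i)^{-1}X_i^\top B_i$ from the first half (where $X_i$ is the matrix whose rows are the sampled parent values of node $i$ and $B_i$ is the vector of sampled values of node $i$), and then computes $\hat\sigma_i^2$ as the empirical mean of the squared residuals (value of node $i$ minus $\langle\hat A_i,\text{parent values}\rangle$)$^2$ over the second half. Then, with probability at least $1-\delta$ over the samples, all the matrices $X_i^\top X_i$ are invertible, all $\hat\sigma_i$ are positive, and the Gaussian Bayesian network $Q$ on $G$ with parameters $(\hat A_i,\hat\sigma_i)$ satisfies $d_{TV}(P,Q)\le\varepsilon$, where $d_{TV}(P,Q)=\sup_A|P(A)-Q(A)|$ over measurable sets $A$. Moreover, for every such $G$ and $d$ and every $m\ge1$, the estimates $\hat A_i$ and $\hat\sigma_i^2$ can be computed with at most $C\cdot m\cdot n\cdot\max(d_{avg},1)\cdot\max(d,1)$ arithmetic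 operations: there is a sequence of at most that many instructions, depending only on $G$ and $m$, each of which loads a natural number or applies $+,-,\times,\div$ to two inputs or earlier results, that produces the estimates from every data set for which all the matrices $X_i^\top X_i$ are invertible, without ever dividing by zero. (When $m$ is of the order of the lower bound above, this is $O\big(\frac{n^2\max(d_{avg},1)^2\max(d,1)}{\varepsilon^2}\log\frac n\delta\big)$ operations.) -/
open MeasureTheory ProbabilityTheory Matrix

namespace GaussBN

/-- Total variation distance `sup_A |P(A) - Q(A)|`, the supremum being over measurable sets. -/
noncomputable def dTV {α : Type*} [MeasurableSpace α] (P Q : Measure α) : ℝ :=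
  ⨆ s : {s : Set α // MeasurableSet s}, |(P s.1).toReal - (Q s.1).toReal|

/-- The Gaussian Bayesian network with coefficient matrix `B` and noise standard deviations `σ`:
the pushforward of `⊗ᵢ N(0, σᵢ²)` under the linear map `η ↦ (I - B)⁻¹ η`. -/
noncomputable def network {n : ℕ} (B : Matrix (Fin n) (Fin n) ℝ) (σ : Fin n → ℝ) :
    Measure (Fin n → ℝ) :=
  Measure.map (fun η => (1 - B)⁻¹ *ᵥ η)
    (Measure.pi fun i => gaussianReal 0 ((σ i ^ 2).toNNReal))

/-- The average in-degree `(1/n) ∑ᵢ |πᵢ|`. -/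
noncomputable def avgInDegree {n : ℕ} (π : Fin n → Finset (Fin n)) : ℝ :=
  (∑ i, ((π i).card : ℝ)) / (n : ℝ)

/-! ### The estimator

A data set is `ω : Fin m → Fin n → ℝ`, with `ω s j` the value of node `j` in sample `s`.
The first half consists of the first `m / 2` samples, the second half of the others. -/

section Estimator

variable {n m : ℕ}

def firstHalf (ω : Fin m → Fin n → ℝ) : Fin (m / 2) → Fin n → ℝ :=
  fun s => ω ⟨s.1, lt_of_lt_of_le s.2 (Nat.div_le_self m 2)⟩

def secondHalf (ω : Fin m → Fin n → ℝ) : Fin (m - m / 2) → Fin n → ℝ :=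
  fun s => ω ⟨m / 2 + s.1, by omega⟩

/-- The matrix whose rows are the parent values of node `i` in the first half. -/
def design (π : Fin n → Finset (Fin n)) (ω : Fin m → Fin n → ℝ) (i : Fin n) :
    Matrix (Fin (m / 2)) {j // j ∈ π i} ℝ :=
  Matrix.of fun s j => firstHalf ω s j.1

/-- The matrix `Xᵢᵀ Xᵢ`. -/
def gram (π : Fin n → Finset (Fin n)) (ω : Fin m → Fin n → ℝ) (i : Fin n) :
    Matrix {j // j ∈ π i} {j // j ∈ π i} ℝ :=
  (design π ω i)ᵀ * design π ω i

/-- The least squares coefficients `(Xᵢᵀ Xᵢ)⁻¹ Xᵢᵀ Bᵢ` of node `i`. -/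
noncomputable def coefEst (π : Fin n → Finset (Fin n)) (ω : Fin m → Fin n → ℝ) (i : Fin n) :
    {j // j ∈ π i} → ℝ :=
  (gram π ω i)⁻¹ *ᵥ ((design π ω i)ᵀ *ᵥ fun s => firstHalf ω s i)

/-- The estimated coefficients of all nodes, extended by `0` outside the parent sets. -/
noncomputable def coefMatrix (π : Fin n → Finset (Fin n)) (ω : Fin m → Fin n → ℝ) :
    Matrix (Fin n) (Fin n) ℝ :=
  Matrix.of fun i j => if hj : j ∈ π i then coefEst π ω i ⟨j, hj⟩ else 0

/-- The variance estimate of node `i`: the mean squared residual over the second half. -/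
noncomputable def varEst (π : Fin n → Finset (Fin n)) (ω : Fin m → Fin n → ℝ) (i : Fin n) : ℝ :=
  (1 / ((m - m / 2 : ℕ) : ℝ)) *
    ∑ s : Fin (m - m / 2),
      (secondHalf ω s i - ∑ j : {j // j ∈ π i}, coefEst π ω i j * secondHalf ω s j.1) ^ 2

noncomputable def sdEst (π : Fin n → Finset (Fin n)) (ω : Fin m → Fin n → ℝ) (i : Fin n) : ℝ :=
  Real.sqrt (varEst π ω i)

end Estimator

/-! ### Arithmetic programs

The running time is the number of arithmetic operations. A program is a list of instructions;
each computes one real number from the inputs and from the results of the earlier instructions,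
and appends it to the memory. Division by zero and reading an empty register abort the run. -/

section Program

/-- An input, or the result of the `k`-th instruction (counted from `0`). -/
inductive Operand (ι : Type) : Type
  | input (i : ι)
  | reg (k : ℕ)

inductive Instr (ι : Type) : Type
  | const (c : ℕ)
  | add (a b : Operand ι)
  | sub (a b : Operand ι)
  | mul (a b : Operand ι)
  | div (a b : Operand ι)

variable {ι : Type}

def Operand.read (x : ι → ℝ) (mem : List ℝ) : Operand ι → Option ℝ
  | .input i => some (x i)
  | .reg k => mem[k]?

noncomputable def Instr.exec (x : ι → ℝ) (mem : List ℝ) : Instr ι → Option ℝ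
  | .const c => some (c : ℝ)
  | .add a b => (a.read x mem).bind fun u => (b.read x mem).bind fun v => some (u + v)
  | .sub a b => (a.read x mem).bind fun u => (b.read x mem).bind fun v => some (u - v)
  | .mul a b => (a.read x mem).bind fun u => (b.read x mem).bind fun v => some (u * v)
  | .div a b => (a.read x mem).bind fun u => (b.read x mem).bind fun v =>
      if v = 0 then none else some (u / v)

/-- Runs a program on the input `x`, starting from the memory `mem`. -/
noncomputable def run (x : ι → ℝ) : List (Instr ι) → List ℝ → Option (List ℝ)
  | [], mem => some mem
  | I :: prog, mem => (I.exec x mem).bind fun v => run x prog (mem ++ [v])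

/-- The program `prog`, with result locations `coefOut` and `varOut`, computes the estimator on
the graph `π` from `m` samples: on every data set for which all the matrices `Xᵢᵀ Xᵢ` are
invertible, it runs without aborting and leaves the estimates at these locations. -/
def ComputesEstimator {n m : ℕ} (π : Fin n → Finset (Fin n))
    (prog : List (Instr (Fin m × Fin n)))
    (coefOut : ∀ i : Fin n, {j // j ∈ π i} → Operand (Fin m × Fin n))
    (varOut : Fin n → Operand (Fin m × Fin n)) : Prop :=
  ∀ ω : Fin m → Fin n → ℝ, (∀ i, IsUnit (gram π ω i)) →
    ∃ mem : List ℝ, run (fun q => ω q.1 q.2) prog [] = some mem ∧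
      (∀ i j, (coefOut i j).read (fun q => ω q.1 q.2) mem = some (coefEst π ω i j)) ∧
      (∀ i, (varOut i).read (fun q => ω q.1 q.2) mem = some (varEst π ω i))

end Program

end GaussBN

/-!
**Total variation.** `d_TV(P, Q)² ≤ KL(P ‖ Q)`, through the Hellinger affinity, and the relative
entropy of two networks on the same graph is a sum over the nodes. Writing a sample as a linear
image of standard Gaussian noise, every linear functional of the sample becomes a vector of noise
coefficients whose norm is the standard deviation of the functional. The contribution of node `i`
depends only on the error `e` of the estimated regression, which is orthogonal to the noise of
node `i`, and on the relative error of the variance estimate for the residual, whose variance is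
`σᵢ² + ‖e‖²`.

**Concentration.** All the functionals that matter at node `i` lie in a subspace of dimension at
most `|πᵢ| + 1`. By a net argument and chi-square tails, each half of the sample is a near-isometry
on this subspace, with distortion `τᵢ`; the normal equations then give `‖e‖ ≤ 2 τᵢ σᵢ`, and the
variance estimate has relative error at most `τᵢ`. Dividing `ε²` among the nodes in proportion to
`|πᵢ| + 1` gives the number of samples.

**Large `δ`.** When `n = 1` and `δ` is close to `1`, the number of samples may be far too small for
concentration, but the success probability required is also small. It is enough to bound from
below the probability that a chi-square variable falls slightly above its mean.

**Arithmetic operations.** The least squares problem of a node is solved by eliminating one parent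
at a time in the data matrix, without forming the Gram matrix: when the Gram matrix is invertible,
every pivot is positive.
-/

namespace GaussBN

/-! ### Least squares by successive elimination -/

section LeastSquares

variable {κ l : Type*} [Fintype κ] [Fintype l]

/-- The coefficient of the orthogonal projection of `v` onto the line through `u`. -/
noncomputable def projCoeff (u v : κ → ℝ) : ℝ := u ⬝ᵥ v / u ⬝ᵥ u

/-- The component of `v` orthogonal to `u`: one step of Gram–Schmidt elimination. -/
noncomputable def reject (u v : κ → ℝ) : κ → ℝ := v - projCoeff u v • u

/-- The coefficients `a` solve the normal equations of the regression of `b` on the vectors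
`X j`: the residual is orthogonal to every regressor. -/
def SolvesNormalEquations (X : l → κ → ℝ) (b : κ → ℝ) (a : l → ℝ) : Prop :=
  ∀ j, X j ⬝ᵥ (b - ∑ i, a i • X i) = 0

lemma dotProduct_reject {u : κ → ℝ} (hu : u ≠ 0) (v : κ → ℝ) : u ⬝ᵥ reject u v = 0 := by
  have : u ⬝ᵥ u ≠ 0 := dotProduct_self_eq_zero.not.2 hu
  simp [reject, projCoeff, dotProduct_sub, this]

lemma sum_smul_reject {k : ℕ} (u : κ → ℝ) (a : Fin k → ℝ) (X : Fin k → κ → ℝ) :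
    ∑ j, a j • reject u (X j) = ∑ j, a j • X j - (∑ j, a j * projCoeff u (X j)) • u := by
  simp only [reject, smul_sub, Finset.sum_sub_distrib, smul_smul, Finset.sum_smul]

lemma linearIndependent_reject {k : ℕ} {X : Fin (k + 1) → κ → ℝ} (hX : LinearIndependent ℝ X) :
    LinearIndependent ℝ fun j : Fin k => reject (X 0) (X j.succ) := by
  rw [Fintype.linearIndependent_iff] at hX ⊢
  intro a ha j
  refine hX (Fin.cons (-∑ j, a j * projCoeff (X 0) (X j.succ)) a) ?_ j.succ
  rw [Fin.sum_univ_succ, ← ha, sum_smul_reject]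
  simp only [Fin.cons_zero, Fin.cons_succ]
  module

lemma SolvesNormalEquations.cons {k : ℕ} {X : Fin (k + 1) → κ → ℝ} {b : κ → ℝ} {a : Fin k → ℝ}
    (hX : X 0 ≠ 0)
    (ha : SolvesNormalEquations (fun j : Fin k => reject (X 0) (X j.succ)) (reject (X 0) b) a) :
    SolvesNormalEquations X b
      (Fin.cons (projCoeff (X 0) b - ∑ j, a j * projCoeff (X 0) (X j.succ)) a) := by
  have residual_eq : b - ∑ i, (Fin.cons (projCoeff (X 0) b -
        ∑ j, a j * projCoeff (X 0) (X j.succ)) a : Fin (k + 1) → ℝ) i • X i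
      = reject (X 0) b - ∑ j, a j • reject (X 0) (X j.succ) := by
    rw [Fin.sum_univ_succ, sum_smul_reject, reject]
    simp only [Fin.cons_zero, Fin.cons_succ]
    module
  have orthogonal_head :
      X 0 ⬝ᵥ (reject (X 0) b - ∑ j, a j • reject (X 0) (X j.succ)) = 0 := by
    simp [dotProduct_sub, dotProduct_sum, dotProduct_reject hX]
  intro j
  rw [residual_eq]
  refine Fin.cases orthogonal_head (fun j => ?_) j
  have decomp : X j.succ = reject (X 0) (X j.succ) + projCoeff (X 0) (X j.succ) • X 0 := by
    simp [reject]
  rw [decomp, add_dotProduct, smul_dotProduct, orthogonal_head, ha j, smul_zero, add_zero]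

lemma SolvesNormalEquations.comp_equiv {l' : Type*} [Fintype l'] {X : l → κ → ℝ} {b : κ → ℝ}
    {a : l → ℝ} (ha : SolvesNormalEquations X b a) (e : l' ≃ l) :
    SolvesNormalEquations (X ∘ e) b (a ∘ e) := fun j => by
  simpa only [Function.comp_apply, e.sum_comp fun i => a i • X i] using ha (e j)

variable [DecidableEq l]

lemma isUnit_transpose_mul_self_iff (A : Matrix κ l ℝ) :
    IsUnit (Aᵀ * A) ↔ LinearIndependent ℝ A.col := by
  rw [← mulVec_injective_iff_isUnit, ← mulVec_injective_iff, ← coe_mulVecLin, ← coe_mulVecLin,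
    ← LinearMap.ker_eq_bot, ← LinearMap.ker_eq_bot, ker_mulVecLin_transpose_mul_self]

lemma solvesNormalEquations_col_iff {A : Matrix κ l ℝ} (hA : IsUnit (Aᵀ * A)) {b : κ → ℝ}
    {a : l → ℝ} :
    SolvesNormalEquations A.col b a ↔ (Aᵀ * A)⁻¹ *ᵥ (Aᵀ *ᵥ b) = a := by
  have sum_eq : ∑ i, a i • A.col i = A *ᵥ a := by
    ext s
    simp [mulVec, dotProduct, mul_comm]
  have mulVec_eq : SolvesNormalEquations A.col b a ↔ Aᵀ *ᵥ (b - A *ᵥ a) = 0 := by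
    rw [SolvesNormalEquations, sum_eq, funext_iff]
    rfl
  rw [mulVec_eq, mulVec_sub, sub_eq_zero, mulVec_mulVec]
  have hdet : IsUnit (Aᵀ * A).det := (isUnit_iff_isUnit_det _).1 hA
  constructor <;> intro h
  · rw [h, mulVec_mulVec, nonsing_inv_mul _ hdet, one_mulVec]
  · rw [← h, mulVec_mulVec _ (Aᵀ * A), mul_nonsing_inv _ hdet, one_mulVec]

end LeastSquares

/-! ### Straight-line programs -/

section Programs

variable {ι : Type}

lemma run_append (x : ι → ℝ) (p q : List (Instr ι)) (mem : List ℝ) :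
    run x (p ++ q) mem = (run x p mem).bind (run x q) := by
  induction p generalizing mem with
  | nil => rfl
  | cons I p ih =>
    simp only [List.cons_append, run]
    cases I.exec x mem with
    | none => rfl
    | some v => exact ih _

lemma length_of_run {x : ι → ℝ} {p : List (Instr ι)} {mem mem' : List ℝ}
    (h : run x p mem = some mem') : mem'.length = mem.length + p.length := by
  induction p generalizing mem with
  | nil => simp_all [run]
  | cons I p ih =>
    obtain ⟨v, -, hrun⟩ := Option.bind_eq_some_iff.1 h
    rw [ih hrun, List.length_append, List.length_singleton, List.length_cons]
    omega

lemma prefix_of_run {x : ι → ℝ} {p : List (Instr ι)} {mem mem' : List ℝ}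
    (h : run x p mem = some mem') : mem <+: mem' := by
  induction p generalizing mem with
  | nil => simp_all [run]
  | cons I p ih =>
    obtain ⟨v, -, hrun⟩ := Option.bind_eq_some_iff.1 h
    exact (List.prefix_append _ _).trans (ih hrun)

lemma Operand.read_of_prefix {x : ι → ℝ} {mem mem' : List ℝ} (h : mem <+: mem')
    {o : Operand ι} {v : ℝ} (ho : o.read x mem = some v) : o.read x mem' = some v := by
  cases o with
  | input i => exact ho
  | reg k =>
    obtain ⟨t, rfl⟩ := h
    obtain ⟨hk, -⟩ := List.getElem?_eq_some_iff.1 ho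
    exact (List.getElem?_append_left hk).trans ho

/-- The program `p` does not abort on the inputs in `D`. -/
def Runs (D : Set (ι → ℝ)) (p : List (Instr ι)) : Prop :=
  ∀ x ∈ D, ∃ mem, run x p [] = some mem

/-- After running `p` on any input in `D`, some fixed operand holds the value of `f`. -/
def Realizes (D : Set (ι → ℝ)) (p : List (Instr ι)) (f : (ι → ℝ) → ℝ) : Prop :=
  ∃ o : Operand ι, ∀ x ∈ D, ∀ mem, run x p [] = some mem → o.read x mem = some (f x)

/-- On the inputs in `D`, the functions in `T` are computable from those in `S` in `k`
operations: any program that realizes `S` extends by at most `k` instructions to one that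
realizes `T`. -/
def Derives (D : Set (ι → ℝ)) (S T : Set ((ι → ℝ) → ℝ)) (k : ℕ) : Prop :=
  ∀ p, Runs D p → (∀ f ∈ S, Realizes D p f) →
    ∃ q, q.length ≤ k ∧ Runs D (p ++ q) ∧ ∀ f ∈ T, Realizes D (p ++ q) f

/-- The coordinate functions of a vector that depends on the input. -/
def coords {κ : Type*} (v : (ι → ℝ) → κ → ℝ) : Set ((ι → ℝ) → ℝ) := Set.range fun s x => v x s

/-- The functions computed when `v` is replaced by its component orthogonal to `u`: the
projection coefficient and the coordinates of that component. -/
def eliminated {κ : Type*} [Fintype κ] (u v : (ι → ℝ) → κ → ℝ) : Set ((ι → ℝ) → ℝ) :=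
  {fun x => projCoeff (u x) (v x)} ∪ coords fun x => reject (u x) (v x)

variable {D : Set (ι → ℝ)} {S S' T T' U : Set ((ι → ℝ) → ℝ)} {k l : ℕ}

lemma Realizes.append {p q : List (Instr ι)} {f : (ι → ℝ) → ℝ} (h : Realizes D p f) :
    Realizes D (p ++ q) f := by
  obtain ⟨o, ho⟩ := h
  refine ⟨o, fun x hx mem hmem => ?_⟩
  rw [run_append] at hmem
  obtain ⟨mem₀, h₀, h₁⟩ := Option.bind_eq_some_iff.1 hmem
  exact Operand.read_of_prefix (prefix_of_run h₁) (ho x hx _ h₀)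

lemma Realizes.congr {p : List (Instr ι)} {f g : (ι → ℝ) → ℝ} (h : Realizes D p f)
    (hfg : ∀ x ∈ D, f x = g x) : Realizes D p g := by
  obtain ⟨o, ho⟩ := h
  exact ⟨o, fun x hx mem hmem => by rw [ho x hx mem hmem, hfg x hx]⟩

namespace Derives

lemma mono (h : Derives D S T k) (hS : S ⊆ S') (hT : T' ⊆ T) (hk : k ≤ l) :
    Derives D S' T' l := fun p hp hp' =>
  let ⟨q, hlen, hrun, hreal⟩ := h p hp fun f hf => hp' f (hS hf)
  ⟨q, hlen.trans hk, hrun, fun f hf => hreal f (hT hf)⟩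

lemma cost_mono (h : Derives D S T k) (hk : k ≤ l) : Derives D S T l :=
  h.mono subset_rfl subset_rfl hk

lemma source_mono (h : Derives D S T k) (hS : S ⊆ S') : Derives D S' T k :=
  h.mono hS subset_rfl le_rfl

lemma congr (h : Derives D S T k) (hT : ∀ g ∈ T', ∃ f ∈ T, ∀ x ∈ D, f x = g x) :
    Derives D S T' k := by
  intro p hp hp'
  obtain ⟨q, hlen, hrun, hreal⟩ := h p hp hp'
  refine ⟨q, hlen, hrun, fun g hg => ?_⟩
  obtain ⟨f, hf, hfg⟩ := hT g hg
  exact (hreal f hf).congr hfg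

lemma trans (h : Derives D S T k) (h' : Derives D (S ∪ T) U l) :
    Derives D S (T ∪ U) (k + l) := by
  intro p hp hp'
  obtain ⟨q, hlen, hrun, hreal⟩ := h p hp hp'
  obtain ⟨q', hlen', hrun', hreal'⟩ := h' _ hrun (by
    rintro f (hf | hf)
    · exact (hp' f hf).append
    · exact hreal f hf)
  rw [List.append_assoc] at hrun' hreal'
  refine ⟨q ++ q', by rw [List.length_append]; omega, hrun', ?_⟩
  rintro f (hf | hf)
  · exact List.append_assoc p q q' ▸ (hreal f hf).append
  · exact hreal' f hf

lemma seq (h : Derives D S T k) (h' : Derives D (S ∪ T) U l) : Derives D S U (k + l) :=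
  (h.trans h').mono subset_rfl Set.subset_union_right le_rfl

lemma union (h : Derives D S T k) (h' : Derives D S U l) : Derives D S (T ∪ U) (k + l) :=
  h.trans (h'.source_mono Set.subset_union_left)

lemma of_subset (h : T ⊆ S) : Derives D S T 0 := fun p hp hp' =>
  ⟨[], le_rfl, by rwa [List.append_nil], fun f hf => (hp' f (h hf)).append⟩

lemma biUnion {α : Type*} (s : Finset α) (T : α → Set ((ι → ℝ) → ℝ)) (k : α → ℕ)
    (h : ∀ a ∈ s, Derives D S (T a) (k a)) :
    Derives D S (⋃ a ∈ s, T a) (∑ a ∈ s, k a) := by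
  classical
  induction s using Finset.induction_on with
  | empty => simpa using of_subset (Set.empty_subset S)
  | insert a s ha ih =>
    rw [Finset.sum_insert ha, Finset.set_biUnion_insert]
    exact (h a (Finset.mem_insert_self a s)).union
      (ih fun b hb => h b (Finset.mem_insert_of_mem hb))

lemma iUnion {α : Type*} [Fintype α] {T : α → Set ((ι → ℝ) → ℝ)}
    (h : ∀ a, Derives D S (T a) k) : Derives D S (⋃ a, T a) (Fintype.card α * k) := by
  simpa using biUnion Finset.univ T (fun _ => k) fun a _ => h a

lemma range {α : Type*} [Fintype α] {f : α → (ι → ℝ) → ℝ} (h : ∀ a, Derives D S {f a} k) :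
    Derives D S (Set.range f) (Fintype.card α * k) := by
  simpa only [Set.iUnion_singleton_eq_range] using iUnion h

lemma instr {v : (ι → ℝ) → ℝ}
    (h : ∀ p, (∀ f ∈ S, Realizes D p f) → ∃ I : Instr ι,
      ∀ x ∈ D, ∀ mem, run x p [] = some mem → I.exec x mem = some (v x)) :
    Derives D S {v} 1 := by
  intro p hp hp'
  obtain ⟨I, hI⟩ := h p hp'
  have run_eq : ∀ x ∈ D, ∀ mem, run x p [] = some mem →
      run x (p ++ [I]) [] = some (mem ++ [v x]) := fun x hx mem hmem => by
    simp [run_append, hmem, run, hI x hx mem hmem]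
  refine ⟨[I], le_rfl, fun x hx => ?_, ?_⟩
  · obtain ⟨mem, hmem⟩ := hp x hx
    exact ⟨_, run_eq x hx mem hmem⟩
  · rintro f rfl
    refine ⟨.reg p.length, fun x hx mem hmem => ?_⟩
    obtain ⟨mem₀, hmem₀⟩ := hp x hx
    rw [run_eq x hx mem₀ hmem₀] at hmem
    obtain rfl := Option.some.inj hmem
    have length_eq : mem₀.length = p.length := by simpa using length_of_run hmem₀
    simp [Operand.read, ← length_eq]

lemma const (c : ℕ) : Derives D S {fun _ => (c : ℝ)} 1 :=
  .instr fun _ _ => ⟨.const c, fun _ _ _ _ => rfl⟩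

section Operations

variable {f g : (ι → ℝ) → ℝ}

lemma add (hf : f ∈ S) (hg : g ∈ S) : Derives D S {fun x => f x + g x} 1 := by
  refine .instr fun p hp => ?_
  obtain ⟨a, ha⟩ := hp f hf
  obtain ⟨b, hb⟩ := hp g hg
  exact ⟨.add a b, fun x hx mem h => by simp [Instr.exec, ha x hx mem h, hb x hx mem h]⟩

lemma sub (hf : f ∈ S) (hg : g ∈ S) : Derives D S {fun x => f x - g x} 1 := by
  refine .instr fun p hp => ?_
  obtain ⟨a, ha⟩ := hp f hf
  obtain ⟨b, hb⟩ := hp g hg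
  exact ⟨.sub a b, fun x hx mem h => by simp [Instr.exec, ha x hx mem h, hb x hx mem h]⟩

lemma mul (hf : f ∈ S) (hg : g ∈ S) : Derives D S {fun x => f x * g x} 1 := by
  refine .instr fun p hp => ?_
  obtain ⟨a, ha⟩ := hp f hf
  obtain ⟨b, hb⟩ := hp g hg
  exact ⟨.mul a b, fun x hx mem h => by simp [Instr.exec, ha x hx mem h, hb x hx mem h]⟩

lemma div (hf : f ∈ S) (hg : g ∈ S) (h0 : ∀ x ∈ D, g x ≠ 0) :
    Derives D S {fun x => f x / g x} 1 := by
  refine .instr fun p hp => ?_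
  obtain ⟨a, ha⟩ := hp f hf
  obtain ⟨b, hb⟩ := hp g hg
  exact ⟨.div a b, fun x hx mem h => by
    simp [Instr.exec, ha x hx mem h, hb x hx mem h, h0 x hx]⟩

end Operations

lemma sum {α : Type*} (s : Finset α) {f : α → (ι → ℝ) → ℝ} (hf : ∀ a ∈ s, f a ∈ S) :
    Derives D S {fun x => ∑ a ∈ s, f a x} (s.card + 1) := by
  classical
  induction s using Finset.induction_on with
  | empty => simpa using const (D := D) (S := S) 0
  | insert a s ha ih =>
    rw [Finset.card_insert_of_notMem ha]
    simp only [Finset.sum_insert ha]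
    exact (ih fun b hb => hf b (Finset.mem_insert_of_mem hb)).seq
      (.add (.inl (hf a (Finset.mem_insert_self a s))) (.inr rfl))

variable {κ : Type*} [Fintype κ] {u v : (ι → ℝ) → κ → ℝ}

lemma dotProduct (hu : coords u ⊆ S) (hv : coords v ⊆ S) :
    Derives D S {fun x => u x ⬝ᵥ v x} (2 * Fintype.card κ + 1) :=
  ((range fun s => .mul (hu ⟨s, rfl⟩) (hv ⟨s, rfl⟩)).seq
    (.sum Finset.univ fun s _ => .inr ⟨s, rfl⟩)).cost_mono (by rw [Finset.card_univ]; omega)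

lemma projCoeff (hu : coords u ⊆ S) (hv : coords v ⊆ S) (h0 : ∀ x ∈ D, u x ≠ 0) :
    Derives D S {fun x => projCoeff (u x) (v x)} (4 * Fintype.card κ + 3) :=
  (((dotProduct hu hv).union (dotProduct hu hu)).seq
    (.div (.inr (.inl rfl)) (.inr (.inr rfl))
      fun x hx => dotProduct_self_eq_zero.not.2 (h0 x hx))).cost_mono (by omega)

lemma eliminated (hu : coords u ⊆ S) (hv : coords v ⊆ S) (h0 : ∀ x ∈ D, u x ≠ 0) :
    Derives D S (eliminated u v) (6 * Fintype.card κ + 3) := by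
  refine ((projCoeff hu hv h0).trans (range (k := 2) fun s => ?_)).cost_mono (by omega)
  exact (mul (.inr rfl) (.inl (hu ⟨s, rfl⟩))).seq (.sub (.inl (.inl (hv ⟨s, rfl⟩))) (.inr rfl))

lemma backSubstitution {X : Fin k → (ι → ℝ) → κ → ℝ} {a : (ι → ℝ) → Fin k → ℝ}
    (hv : (fun x => GaussBN.projCoeff (u x) (v x)) ∈ S)
    (hX : ∀ j, (fun x => GaussBN.projCoeff (u x) (X j x)) ∈ S) (ha : coords a ⊆ S) :
    Derives D S {fun x => GaussBN.projCoeff (u x) (v x) -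
      ∑ j, a x j * GaussBN.projCoeff (u x) (X j x)} (2 * k + 2) := by
  have hX' : (coords fun x j => GaussBN.projCoeff (u x) (X j x)) ⊆ S := by
    rintro _ ⟨j, rfl⟩
    exact hX j
  exact ((dotProduct ha hX').seq (.sub (.inl hv) (.inr rfl))).cost_mono (by simp)

end Derives

lemma exists_derives_solvesNormalEquations {κ : Type*} [Fintype κ] {k : ℕ}
    {X : Fin k → (ι → ℝ) → κ → ℝ} {b : (ι → ℝ) → κ → ℝ} (hX : ∀ j, coords (X j) ⊆ S)
    (hb : coords b ⊆ S) (hli : ∀ x ∈ D, LinearIndependent ℝ fun j => X j x) :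
    ∃ a : (ι → ℝ) → Fin k → ℝ, Derives D S (coords a) (k ^ 2 * (6 * Fintype.card κ + 5)) ∧
      ∀ x ∈ D, SolvesNormalEquations (fun j => X j x) (b x) (a x) := by
  induction k generalizing S b with
  | zero =>
    exact ⟨0, (Derives.of_subset (by simp [coords])).cost_mono zero_le, fun _ _ j => j.elim0⟩
  | succ k ih =>
    have head_ne_zero : ∀ x ∈ D, X 0 x ≠ 0 := fun x hx => (hli x hx).ne_zero 0
    let E := eliminated (X 0) b ∪ ⋃ j : Fin k, eliminated (X 0) (X j.succ)
    have derives_elimination : Derives D S E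
        ((6 * Fintype.card κ + 3) + k * (6 * Fintype.card κ + 3)) := by
      simpa only [Fintype.card_fin] using (Derives.eliminated (hX 0) hb head_ne_zero).union
        (Derives.iUnion fun j : Fin k => .eliminated (hX 0) (hX j.succ) head_ne_zero)
    have tail_subset (j : Fin k) : eliminated (X 0) (X j.succ) ⊆ S ∪ E :=
      fun f hf => .inr (.inr (Set.mem_iUnion.2 ⟨j, hf⟩))
    obtain ⟨a, derives_tail, ha⟩ := ih
      (X := fun j x => reject (X 0 x) (X j.succ x)) (b := fun x => reject (X 0 x) (b x))
      (fun j => Set.subset_union_right.trans (tail_subset j))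
      (fun f hf => .inr (.inl (.inr hf))) (fun x hx => linearIndependent_reject (hli x hx))
    have derives_head := Derives.backSubstitution (D := D) (S := S ∪ E ∪ coords a) (u := X 0)
      (v := b) (X := fun j => X j.succ) (.inl (.inr (.inl (.inl rfl))))
      (fun j => .inl (tail_subset j (.inl rfl))) Set.subset_union_right
    refine ⟨fun x => Fin.cons _ (a x),
      (derives_elimination.seq (derives_tail.trans derives_head)).mono subset_rfl ?_ ?_,
      fun x hx => (ha x hx).cons (head_ne_zero x hx)⟩
    · rintro _ ⟨j, rfl⟩
      exact Fin.cases (.inr rfl) (fun j => .inl ⟨j, rfl⟩) j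
    · nlinarith

end Programs

/-! ### The program for the estimator -/

section EstimatorProgram

variable {n m : ℕ}

/-- The inputs, as flattened data sets, on which the estimator is defined. -/
def regularData (m : ℕ) (π : Fin n → Finset (Fin n)) : Set (Fin m × Fin n → ℝ) :=
  {x | ∀ i, IsUnit (gram π (Function.curry x) i)}

/-- The entries of the data set, as functions of the data set. -/
def inputs (m n : ℕ) : Set ((Fin m × Fin n → ℝ) → ℝ) := Set.range fun q x => x q

lemma derives_coefEst (π : Fin n → Finset (Fin n)) (i : Fin n) :
    Derives (regularData m π) (inputs m n) (coords fun x => coefEst π (Function.curry x) i)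
      ((π i).card ^ 2 * (6 * (m / 2) + 5)) := by
  let e := (π i).equivFin
  obtain ⟨a, derives_a, ha⟩ := exists_derives_solvesNormalEquations (D := regularData m π)
    (S := inputs m n) (X := fun j x => (design π (Function.curry x) i).col (e.symm j))
    (b := fun x s => firstHalf (Function.curry x) s i)
    (by rintro j _ ⟨s, rfl⟩; exact ⟨(_, _), rfl⟩) (by rintro _ ⟨s, rfl⟩; exact ⟨(_, _), rfl⟩)
    (fun x hx => ((isUnit_transpose_mul_self_iff _).1 (hx i)).comp _ e.symm.injective)
  rw [Fintype.card_fin] at derives_a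
  refine derives_a.congr ?_
  rintro _ ⟨j, rfl⟩
  refine ⟨_, ⟨e j, rfl⟩, fun x hx => ?_⟩
  have normal_equations := (ha x hx).comp_equiv e
  simp only [Function.comp_def, Equiv.symm_apply_apply] at normal_equations
  exact (congrFun ((solvesNormalEquations_col_iff (hx i)).1 normal_equations) j).symm

lemma derives_varEst {D : Set (Fin m × Fin n → ℝ)} {S : Set ((Fin m × Fin n → ℝ) → ℝ)}
    (hm : 1 ≤ m) (π : Fin n → Finset (Fin n)) (i : Fin n) (hS : inputs m n ⊆ S)
    (hc : coords (fun x => coefEst π (Function.curry x) i) ⊆ S) :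
    Derives D S {fun x => varEst π (Function.curry x) i} (m * (2 * (π i).card + 9)) := by
  let r : Fin (m - m / 2) → (Fin m × Fin n → ℝ) → ℝ := fun s x =>
    secondHalf (Function.curry x) s i -
      coefEst π (Function.curry x) i ⬝ᵥ fun j => secondHalf (Function.curry x) s j.1
  have derives_residual (s) : Derives D S {r s} (2 * (π i).card + 2) := by
    have coords_subset : (coords fun x (j : {j // j ∈ π i}) =>
        secondHalf (Function.curry x) s j.1) ⊆ S := by
      rintro _ ⟨j, rfl⟩
      exact hS ⟨(_, _), rfl⟩
    exact ((Derives.dotProduct hc coords_subset).seq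
      (.sub (.inl (hS ⟨(_, _), rfl⟩)) (.inr rfl))).cost_mono (by simp)
  have derives_sq (s) : Derives D S {fun x => r s x ^ 2} (2 * (π i).card + 3) := by
    simp only [sq]
    exact (derives_residual s).seq (.mul (.inr rfl) (.inr rfl))
  have derives_sum : Derives D S {fun x => ∑ s, r s x ^ 2}
      ((m - m / 2) * (2 * (π i).card + 3) + ((m - m / 2) + 1)) := by
    simpa using (Derives.range derives_sq).seq (.sum Finset.univ fun s _ => .inr ⟨s, rfl⟩)
  have derives_inv : Derives D S {fun _ => ((1 : ℕ) : ℝ) / ((m - m / 2 : ℕ) : ℝ)} 3 :=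
    ((Derives.const 1).union (.const (m - m / 2))).seq
      (.div (.inr (.inl rfl)) (.inr (.inr rfl)) fun _ _ => by rw [Nat.cast_ne_zero]; omega)
  have derives_mean := (derives_inv.union derives_sum).seq
    (.mul (.inr (.inl rfl)) (.inr (.inr rfl)))
  rw [Nat.cast_one] at derives_mean
  refine derives_mean.cost_mono ?_
  nlinarith [Nat.mul_le_mul_right (2 * (π i).card + 4) (Nat.sub_le m (m / 2))]

/-- The number of operations spent on node `i`. -/
def nodeCost (m : ℕ) (π : Fin n → Finset (Fin n)) (i : Fin n) : ℕ :=
  (π i).card ^ 2 * (6 * (m / 2) + 5) + m * (2 * (π i).card + 9)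

lemma exists_computesEstimator (hm : 1 ≤ m) (π : Fin n → Finset (Fin n)) :
    ∃ (prog : List (Instr (Fin m × Fin n)))
      (coefOut : ∀ i : Fin n, {j // j ∈ π i} → Operand (Fin m × Fin n))
      (varOut : Fin n → Operand (Fin m × Fin n)),
      ComputesEstimator π prog coefOut varOut ∧ prog.length ≤ ∑ i, nodeCost m π i := by
  have derives_node (i) : Derives (regularData m π) (inputs m n)
      (coords (fun x => coefEst π (Function.curry x) i) ∪
        {fun x => varEst π (Function.curry x) i}) (nodeCost m π i) :=
    (derives_coefEst π i).trans
      (derives_varEst hm π i Set.subset_union_left Set.subset_union_right)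
  obtain ⟨prog, hlen, hrun, hreal⟩ :=
    Derives.biUnion Finset.univ _ _ (fun i _ => derives_node i) [] (fun x _ => ⟨[], rfl⟩) (by
      rintro _ ⟨q, rfl⟩
      exact ⟨.input q, fun x _ mem _ => rfl⟩)
  rw [List.nil_append] at hrun hreal
  have realizes_coef (i) (j : {j // j ∈ π i}) : Realizes (regularData m π) prog
      (fun x => coefEst π (Function.curry x) i j) :=
    hreal _ (Set.mem_biUnion (Finset.mem_coe.2 (Finset.mem_univ i)) (.inl ⟨j, rfl⟩))
  have realizes_var (i) : Realizes (regularData m π) prog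
      (fun x => varEst π (Function.curry x) i) :=
    hreal _ (Set.mem_biUnion (Finset.mem_coe.2 (Finset.mem_univ i)) (.inr rfl))
  choose coefOut hcoef using realizes_coef
  choose varOut hvar using realizes_var
  refine ⟨prog, coefOut, varOut, fun ω hω => ?_, hlen⟩
  obtain ⟨mem, hmem⟩ := hrun (Function.uncurry ω) hω
  exact ⟨mem, hmem, fun i j => hcoef i j (Function.uncurry ω) hω _ hmem,
    fun i => hvar i (Function.uncurry ω) hω _ hmem⟩

lemma nodeCost_le {D : ℝ} (hm : 1 ≤ m) (hD : 1 ≤ D) {π : Fin n → Finset (Fin n)} {i : Fin n}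
    (hi : ((π i).card : ℝ) ≤ D) :
    (nodeCost m π i : ℝ) ≤ 10 * m * D * ((π i).card + 1) := by
  have one_le_m : (1 : ℝ) ≤ m := by exact_mod_cast hm
  have half_le : ((m / 2 : ℕ) : ℝ) ≤ m / 2 := Nat.cast_div_le
  have regression : ((π i).card : ℝ) ^ 2 * (6 * ((m / 2 : ℕ) : ℝ) + 5)
      ≤ ((π i).card * D) * (8 * m) := by
    rw [sq]
    gcongr
    linarith
  have residuals : (m : ℝ) * (2 * (π i).card + 9) ≤ m * ((2 * (π i).card + 10) * D) := by
    gcongr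
    nlinarith [Nat.cast_nonneg (α := ℝ) (π i).card]
  simp only [nodeCost]
  push_cast
  linarith

lemma sum_card_add_one_le (π : Fin n → Finset (Fin n)) :
    ∑ i, (((π i).card : ℝ) + 1) ≤ 2 * (n * max (avgInDegree π) 1) := by
  rcases Nat.eq_zero_or_pos n with rfl | hn
  · simp
  have n_pos : (0 : ℝ) < n := by exact_mod_cast hn
  calc ∑ i, (((π i).card : ℝ) + 1) = n * avgInDegree π + n * 1 := by
        rw [Finset.sum_add_distrib, avgInDegree, mul_div_cancel₀ _ n_pos.ne']
        simp
    _ ≤ n * max (avgInDegree π) 1 + n * max (avgInDegree π) 1 := by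
        gcongr
        exacts [le_max_left _ _, le_max_right _ _]
    _ = _ := by ring

lemma sum_nodeCost_le {d : ℕ} (hm : 1 ≤ m) {π : Fin n → Finset (Fin n)}
    (hd : ∀ i, (π i).card ≤ d) :
    ((∑ i, nodeCost m π i : ℕ) : ℝ) ≤ 20 * m * (n * max (avgInDegree π) 1) * max (d : ℝ) 1 :=
  calc ((∑ i, nodeCost m π i : ℕ) : ℝ)
      ≤ ∑ i, 10 * m * max (d : ℝ) 1 * (((π i).card : ℝ) + 1) := by
        push_cast
        exact Finset.sum_le_sum fun i _ => nodeCost_le hm (le_max_right _ _)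
          ((Nat.cast_le.2 (hd i)).trans (le_max_left _ _))
    _ ≤ 10 * m * max (d : ℝ) 1 * (2 * (n * max (avgInDegree π) 1)) := by
        rw [← Finset.mul_sum]
        gcongr
        exact sum_card_add_one_le π
    _ = _ := by ring

end EstimatorProgram

/-! ### Total variation and relative entropy -/

section TotalVariation

open Real

variable {α : Type*} [MeasurableSpace α]

lemma sq_integral_le {μ : Measure α} [IsFiniteMeasure μ] {u : α → ℝ} (hu : Integrable u μ)
    (hu2 : Integrable (fun x => u x ^ 2) μ) :
    (∫ x, u x ∂μ) ^ 2 ≤ μ.real Set.univ * ∫ x, u x ^ 2 ∂μ := by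
  rcases eq_zero_or_neZero μ with rfl | hμ
  · simp
  have jensen : (⨍ x, u x ∂μ) ^ 2 ≤ ⨍ x, u x ^ 2 ∂μ :=
    even_two.convexOn_pow.map_average_le (by fun_prop) isClosed_univ (by simp) hu hu2
  have mass_pos : 0 < μ.real Set.univ := measureReal_univ_pos
  rw [average_eq, average_eq, smul_eq_mul, smul_eq_mul, mul_pow] at jensen
  calc (∫ x, u x ∂μ) ^ 2
      = μ.real Set.univ ^ 2 * ((μ.real Set.univ)⁻¹ ^ 2 * (∫ x, u x ∂μ) ^ 2) := by field_simp
    _ ≤ μ.real Set.univ ^ 2 * ((μ.real Set.univ)⁻¹ * ∫ x, u x ^ 2 ∂μ) := by gcongr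
    _ = _ := by field_simp

/-- The two-point case of the bound of the total variation distance by the Hellinger affinity. -/
lemma sq_sub_le_one_sub_sq_add {a b I J : ℝ} (ha : a ∈ Set.Icc 0 1) (hb : b ∈ Set.Icc 0 1)
    (hI : I ^ 2 ≤ a * b) (hJ : J ^ 2 ≤ (1 - a) * (1 - b)) :
    (a - b) ^ 2 ≤ 1 - (I + J) ^ 2 := by
  obtain ⟨ha0, ha1⟩ := ha
  obtain ⟨hb0, hb1⟩ := hb
  have va : 0 ≤ a * (1 - a) := mul_nonneg ha0 (by linarith)
  have vb : 0 ≤ b * (1 - b) := mul_nonneg hb0 (by linarith)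
  have cross : 2 * (I * J) ≤ a * (1 - a) + b * (1 - b) := by
    have prod_sq : (I * J) ^ 2 ≤ (a * (1 - a)) * (b * (1 - b)) :=
      calc (I * J) ^ 2 = I ^ 2 * J ^ 2 := by ring
        _ ≤ (a * b) * ((1 - a) * (1 - b)) := by gcongr
        _ = _ := by ring
    refine le_of_abs_le (abs_le_of_sq_le_sq ?_ (by linarith))
    nlinarith [sq_nonneg (a * (1 - a) - b * (1 - b))]
  nlinarith

variable {P Q : Measure α} [IsProbabilityMeasure P] [IsProbabilityMeasure Q]

lemma dTV_le_of_hellinger {u : α → ℝ} (hu : Integrable u P)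
    (hu2 : Integrable (fun x => u x ^ 2) P)
    (hQ : Q = P.withDensity fun x => ENNReal.ofReal (u x ^ 2)) {ε : ℝ} (hε : 0 ≤ ε)
    (h : 1 - ε ^ 2 ≤ (∫ x, u x ∂P) ^ 2) : dTV P Q ≤ ε := by
  have real_Q {s : Set α} (hs : MeasurableSet s) : Q.real s = ∫ x in s, u x ^ 2 ∂P := by
    rw [measureReal_def, hQ, withDensity_apply _ hs, integral_eq_lintegral_of_nonneg_ae
      (Filter.Eventually.of_forall fun x => sq_nonneg _) hu2.restrict.aestronglyMeasurable]
  have cauchy_schwarz {s : Set α} (hs : MeasurableSet s) :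
      (∫ x in s, u x ∂P) ^ 2 ≤ P.real s * Q.real s := by
    simpa only [real_Q hs, measureReal_restrict_apply_univ] using
      sq_integral_le (μ := P.restrict s) hu.restrict hu2.restrict
  have : Nonempty {s : Set α // MeasurableSet s} := ⟨⟨∅, MeasurableSet.empty⟩⟩
  refine ciSup_le fun ⟨s, hs⟩ => abs_le_of_sq_le_sq ?_ hε
  have on_compl := cauchy_schwarz hs.compl
  rw [probReal_compl_eq_one_sub hs, probReal_compl_eq_one_sub hs] at on_compl
  have sq_le := sq_sub_le_one_sub_sq_add ⟨measureReal_nonneg, measureReal_le_one⟩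
    ⟨measureReal_nonneg, measureReal_le_one⟩ (cauchy_schwarz hs) on_compl
  rw [integral_add_compl hs hu] at sq_le
  exact sq_le.trans (by linarith)

lemma dTV_le_of_integral_le {Z : α → ℝ} (hZ : Integrable Z P)
    (hQ : Q = P.withDensity fun x => ENNReal.ofReal (exp (-Z x))) {ε : ℝ} (hε : 0 ≤ ε)
    (h : ∫ x, Z x ∂P ≤ ε ^ 2) : dTV P Q ≤ ε := by
  have exp_half_sq (y : ℝ) : exp (-y / 2) ^ 2 = exp (-y) := by
    rw [← exp_nat_mul]
    congr 1
    push_cast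
    ring
  have hmeas : AEStronglyMeasurable (fun x => exp (-Z x / 2)) P :=
    continuous_exp.comp_aestronglyMeasurable (hZ.neg.div_const 2).aestronglyMeasurable
  have memLp : MemLp (fun x => exp (-Z x / 2)) 2 P := by
    refine (memLp_two_iff_integrable_sq hmeas).2 ⟨hmeas.pow 2, ?_⟩
    rw [hasFiniteIntegral_iff_ofReal (Filter.Eventually.of_forall fun x => sq_nonneg _)]
    simp only [exp_half_sq]
    rw [← setLIntegral_univ, ← withDensity_apply _ MeasurableSet.univ, ← hQ]
    exact measure_lt_top Q _
  have integrable := memLp.integrable one_le_two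
  have jensen : exp (-(∫ x, Z x ∂P) / 2) ≤ ∫ x, exp (-Z x / 2) ∂P := by
    have := convexOn_exp.map_integral_le (by fun_prop) isClosed_univ (by simp)
      (hZ.neg.div_const 2) integrable
    simpa only [Pi.neg_apply, integral_div, integral_neg] using this
  refine dTV_le_of_hellinger integrable memLp.integrable_sq (by simpa only [exp_half_sq]) hε ?_
  calc 1 - ε ^ 2 ≤ exp (-∫ x, Z x ∂P) := by linarith [add_one_le_exp (-∫ x, Z x ∂P)]
    _ = exp (-(∫ x, Z x ∂P) / 2) ^ 2 := (exp_half_sq _).symm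
    _ ≤ _ := by gcongr

end TotalVariation

/-! ### Gaussian laws -/

section Gaussian

open scoped NNReal RealInnerProductSpace

lemma map_inner_stdGaussian {E : Type*} [NormedAddCommGroup E] [InnerProductSpace ℝ E]
    [FiniteDimensional ℝ E] [MeasurableSpace E] [BorelSpace E] (c : E) :
    (stdGaussian E).map (fun x => ⟪c, x⟫) = gaussianReal 0 (‖c‖ ^ 2).toNNReal := by
  change (stdGaussian E).map (innerSL ℝ c) = _
  rw [IsGaussian.map_eq_gaussianReal, integral_strongDual_stdGaussian, variance_dual_stdGaussian,
    innerSL_apply_norm]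

variable {ι : Type*} [Fintype ι]

lemma map_mul_pi_gaussianReal (r : ι → ℝ) :
    (Measure.pi fun _ : ι => gaussianReal 0 1).map (fun g i => r i * g i)
      = Measure.pi fun i => gaussianReal 0 (r i ^ 2).toNNReal := by
  rw [Measure.pi_map_pi (f := fun i y => r i * y) fun i => by fun_prop]
  congr with i : 1
  rw [gaussianReal_map_const_mul, mul_zero, mul_one, Real.toNNReal_of_nonneg (sq_nonneg _)]

lemma pi_gaussianReal_eq_withDensity {v : ι → ℝ≥0} (hv : ∀ i, v i ≠ 0) :
    (Measure.pi fun i => gaussianReal 0 (v i))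
      = volume.withDensity fun x : ι → ℝ =>
          ENNReal.ofReal (∏ i, gaussianPDFReal 0 (v i) (x i)) := by
  refine (Measure.pi_eq fun s hs => ?_)
  have integrable (i) : Integrable (gaussianPDFReal 0 (v i)) (volume.restrict (s i)) :=
    (integrable_gaussianPDFReal _ _).restrict
  rw [withDensity_apply _ (MeasurableSet.univ_pi hs), volume_pi, Measure.restrict_pi_pi,
    ← ofReal_integral_eq_lintegral_ofReal (Integrable.fintype_prod integrable)
      (Filter.Eventually.of_forall fun x => Finset.prod_nonneg fun i _ =>
        gaussianPDFReal_nonneg _ _ _), integral_fintype_prod_eq_prod,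
    ENNReal.ofReal_prod_of_nonneg fun i _ => integral_nonneg fun x => gaussianPDFReal_nonneg _ _ _]
  exact Finset.prod_congr rfl fun i _ => (gaussianReal_apply_eq_integral _ (hv i) _).symm

end Gaussian

/-! ### The relative entropy of two networks -/

section Networks

open Real
open scoped RealInnerProductSpace

variable {n : ℕ} {B B' : Matrix (Fin n) (Fin n) ℝ} {σ σ' : Fin n → ℝ}

/-- The sample of the network driven by the standard Gaussian vector `g`. -/
noncomputable def netMap (B : Matrix (Fin n) (Fin n) ℝ) (σ : Fin n → ℝ)
    (g : EuclideanSpace ℝ (Fin n)) : Fin n → ℝ :=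
  (1 - B)⁻¹ *ᵥ fun j => σ j * g j

/-- The coefficient matrices of networks: strictly lower triangular, as the nodes are numbered in
a topological order. -/
def IsStrictlyLower (B : Matrix (Fin n) (Fin n) ℝ) : Prop := ∀ i j, i ≤ j → B i j = 0

/-- The density of the network with respect to Lebesgue measure. -/
noncomputable def networkPDF (B : Matrix (Fin n) (Fin n) ℝ) (σ x : Fin n → ℝ) : ℝ :=
  ∏ i, gaussianPDFReal 0 (σ i ^ 2).toNNReal ((1 - B).row i ⬝ᵥ x)

/-- The contribution of node `i` to the log-likelihood ratio of the networks `(B, σ)` and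
`(B', σ')` at `x`. -/
noncomputable def nodeLogRatio (B B' : Matrix (Fin n) (Fin n) ℝ) (σ σ' : Fin n → ℝ) (i : Fin n)
    (x : Fin n → ℝ) : ℝ :=
  log (σ' i ^ 2 / σ i ^ 2) / 2 - ((1 - B).row i ⬝ᵥ x) ^ 2 / (2 * σ i ^ 2)
    + ((1 - B').row i ⬝ᵥ x) ^ 2 / (2 * σ' i ^ 2)

lemma continuous_netMap (B : Matrix (Fin n) (Fin n) ℝ) (σ : Fin n → ℝ) :
    Continuous (netMap B σ) := by
  unfold netMap
  fun_prop

lemma network_eq_map (B : Matrix (Fin n) (Fin n) ℝ) (σ : Fin n → ℝ) :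
    network B σ = (stdGaussian (EuclideanSpace ℝ (Fin n))).map (netMap B σ) := by
  rw [network, ← map_mul_pi_gaussianReal, Measure.map_map (by fun_prop) (by fun_prop),
    ← map_pi_eq_stdGaussian,
    Measure.map_map (continuous_netMap B σ).measurable (WithLp.measurable_toLp 2 _)]
  rfl

instance (B : Matrix (Fin n) (Fin n) ℝ) (σ : Fin n → ℝ) : IsProbabilityMeasure (network B σ) :=
  Measure.isProbabilityMeasure_map (by fun_prop)

section SecondMoments

variable {a : Fin n → ℝ} {c : EuclideanSpace ℝ (Fin n)}

lemma map_dotProduct_network (h : ∀ g, a ⬝ᵥ netMap B σ g = ⟪c, g⟫) :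
    (network B σ).map (fun x => a ⬝ᵥ x) = gaussianReal 0 (‖c‖ ^ 2).toNNReal := by
  rw [network_eq_map, Measure.map_map (by fun_prop) (continuous_netMap B σ).measurable,
    ← map_inner_stdGaussian]
  exact congrArg (Measure.map · _) (funext h)

lemma integrable_sq_dotProduct_network (h : ∀ g, a ⬝ᵥ netMap B σ g = ⟪c, g⟫) :
    Integrable (fun x => (a ⬝ᵥ x) ^ 2) (network B σ) := by
  have : Integrable (fun y : ℝ => y ^ 2) ((network B σ).map fun x => a ⬝ᵥ x) := by
    rw [map_dotProduct_network h]
    exact (memLp_id_gaussianReal' 2 (by simp)).integrable_sq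
  exact this.comp_aemeasurable (by fun_prop)

lemma integral_sq_dotProduct_network (h : ∀ g, a ⬝ᵥ netMap B σ g = ⟪c, g⟫) :
    ∫ x, (a ⬝ᵥ x) ^ 2 ∂network B σ = ‖c‖ ^ 2 := by
  have second_moment := variance_fun_id_gaussianReal (μ := 0) (v := (‖c‖ ^ 2).toNNReal)
  rw [variance_of_integral_eq_zero (by fun_prop) (by simp), ← map_dotProduct_network h,
    integral_map (by fun_prop) (by fun_prop)] at second_moment
  rw [second_moment, coe_toNNReal _ (sq_nonneg _)]

end SecondMoments

lemma IsStrictlyLower.det_one_sub (hB : IsStrictlyLower B) : (1 - B).det = 1 := by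
  rw [det_of_isLowerTriangular]
  · simp [hB _ _ le_rfl]
  · intro i j (hij : i < j)
    simp [hB i j hij.le, hij.ne]

lemma IsStrictlyLower.isUnit_det_one_sub (hB : IsStrictlyLower B) : IsUnit (1 - B).det := by
  rw [hB.det_one_sub]
  exact isUnit_one

lemma one_sub_mulVec_netMap (hB : IsStrictlyLower B) (σ : Fin n → ℝ)
    (g : EuclideanSpace ℝ (Fin n)) :
    (1 - B) *ᵥ netMap B σ g = fun j => σ j * g j := by
  rw [netMap, mulVec_mulVec, mul_nonsing_inv _ hB.isUnit_det_one_sub, one_mulVec]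

lemma one_sub_dotProduct_netMap (hB : IsStrictlyLower B) (σ : Fin n → ℝ)
    (g : EuclideanSpace ℝ (Fin n)) (i : Fin n) :
    (1 - B).row i ⬝ᵥ netMap B σ g = ⟪EuclideanSpace.single i (σ i), g⟫ := by
  rw [EuclideanSpace.inner_single_left]
  exact congrFun (one_sub_mulVec_netMap hB σ g) i

lemma measurePreserving_inv_one_sub_mulVec (hB : IsStrictlyLower B) :
    MeasurePreserving fun x : Fin n → ℝ => (1 - B)⁻¹ *ᵥ x := by
  have hdet : ((1 - B)⁻¹).det = 1 := by rw [det_nonsing_inv, hB.det_one_sub, Ring.inverse_one]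
  have map_volume := Real.map_matrix_volume_pi_eq_smul_volume_pi (M := (1 - B)⁻¹) (by simp [hdet])
  rw [hdet, inv_one, abs_one, ENNReal.ofReal_one, one_smul] at map_volume
  exact ⟨by fun_prop, map_volume⟩

lemma measurable_networkPDF (B : Matrix (Fin n) (Fin n) ℝ) (σ : Fin n → ℝ) :
    Measurable (networkPDF B σ) :=
  Finset.measurable_fun_prod _ fun _ _ => (measurable_gaussianPDFReal _ _).comp (by fun_prop)

lemma network_eq_withDensity (hB : IsStrictlyLower B) (hσ : ∀ i, 0 < σ i) :
    network B σ = volume.withDensity fun x => ENNReal.ofReal (networkPDF B σ x) := by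
  ext s hs
  rw [network, Measure.map_apply (by fun_prop) hs,
    pi_gaussianReal_eq_withDensity (fun i => by simpa using (hσ i).ne'),
    withDensity_apply _ ((measurePreserving_inv_one_sub_mulVec hB).measurable hs),
    withDensity_apply _ hs, ← (measurePreserving_inv_one_sub_mulVec hB).setLIntegral_comp_preimage
      hs (measurable_networkPDF B σ).ennreal_ofReal]
  have residual_eq (x : Fin n → ℝ) (i : Fin n) : (1 - B).row i ⬝ᵥ ((1 - B)⁻¹ *ᵥ x) = x i := by
    change ((1 - B) *ᵥ ((1 - B)⁻¹ *ᵥ x)) i = x i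
    rw [mulVec_mulVec, mul_nonsing_inv _ hB.isUnit_det_one_sub, one_mulVec]
  simp only [networkPDF, residual_eq]

lemma gaussianPDFReal_eq_mul_exp {s t : ℝ} (hs : 0 < s) (ht : 0 < t) (y z : ℝ) :
    gaussianPDFReal 0 (t ^ 2).toNNReal z = gaussianPDFReal 0 (s ^ 2).toNNReal y *
      exp (-(log (t ^ 2 / s ^ 2) / 2 - y ^ 2 / (2 * s ^ 2) + z ^ 2 / (2 * t ^ 2))) := by
  have pdf_eq (r w : ℝ) (hr : 0 < r) : gaussianPDFReal 0 (r ^ 2).toNNReal w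
      = (√(2 * π))⁻¹ * exp (-log r - w ^ 2 / (2 * r ^ 2)) := by
    rw [gaussianPDFReal, coe_toNNReal _ (sq_nonneg r), sqrt_mul (by positivity), sqrt_sq hr.le,
      mul_inv, sub_zero, neg_div, sub_eq_add_neg, exp_add, exp_neg (log r), exp_log hr, mul_assoc]
  rw [pdf_eq t z ht, pdf_eq s y hs, mul_assoc, ← exp_add, log_div (by positivity) (by positivity),
    log_pow, log_pow]
  congr 2
  push_cast
  ring

lemma networkPDF_eq_mul_exp (hσ : ∀ i, 0 < σ i) (hσ' : ∀ i, 0 < σ' i) (x : Fin n → ℝ) :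
    networkPDF B' σ' x = networkPDF B σ x * exp (-∑ i, nodeLogRatio B B' σ σ' i x) := by
  rw [← Finset.sum_neg_distrib, exp_sum, networkPDF, networkPDF, ← Finset.prod_mul_distrib]
  exact Finset.prod_congr rfl fun i _ => gaussianPDFReal_eq_mul_exp (hσ i) (hσ' i) _ _

lemma network_eq_withDensity_network (hB : IsStrictlyLower B) (hB' : IsStrictlyLower B')
    (hσ : ∀ i, 0 < σ i) (hσ' : ∀ i, 0 < σ' i) :
    network B' σ' = (network B σ).withDensity fun x =>
      ENNReal.ofReal (exp (-∑ i, nodeLogRatio B B' σ σ' i x)) := by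
  have hmeas : Measurable fun x => exp (-∑ i, nodeLogRatio B B' σ σ' i x) := by
    unfold nodeLogRatio
    exact Continuous.measurable (by fun_prop)
  have networkPDF_nonneg (x) : 0 ≤ networkPDF B σ x :=
    Finset.prod_nonneg fun i _ => gaussianPDFReal_nonneg _ _ _
  rw [network_eq_withDensity hB hσ, network_eq_withDensity hB' hσ',
    ← withDensity_mul _ (measurable_networkPDF B σ).ennreal_ofReal hmeas.ennreal_ofReal]
  congr with x
  rw [Pi.mul_apply, ← ENNReal.ofReal_mul (networkPDF_nonneg x), networkPDF_eq_mul_exp hσ hσ']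

lemma integrable_nodeLogRatio {i : Fin n} {c : EuclideanSpace ℝ (Fin n)} (hB : IsStrictlyLower B)
    (hc : ∀ g, (1 - B').row i ⬝ᵥ netMap B σ g = ⟪c, g⟫) :
    Integrable (nodeLogRatio B B' σ σ' i) (network B σ) :=
  ((integrable_const _).sub ((integrable_sq_dotProduct_network
    fun g => one_sub_dotProduct_netMap hB σ g i).div_const _)).add
    ((integrable_sq_dotProduct_network hc).div_const _)

lemma integral_nodeLogRatio {i : Fin n} {c : EuclideanSpace ℝ (Fin n)} (hB : IsStrictlyLower B)
    (hc : ∀ g, (1 - B').row i ⬝ᵥ netMap B σ g = ⟪c, g⟫) (hσ : 0 < σ i) (hσ' : 0 < σ' i) :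
    ∫ x, nodeLogRatio B B' σ σ' i x ∂network B σ
      = (log (σ' i ^ 2 / σ i ^ 2) + ‖c‖ ^ 2 / σ' i ^ 2 - 1) / 2 := by
  have residual := fun g => one_sub_dotProduct_netMap hB σ g i
  have hi := (integrable_sq_dotProduct_network residual).div_const (2 * σ i ^ 2)
  have hi' := (integrable_sq_dotProduct_network hc).div_const (2 * σ' i ^ 2)
  have hsub : Integrable (fun x => log (σ' i ^ 2 / σ i ^ 2) / 2 -
      ((1 - B).row i ⬝ᵥ x) ^ 2 / (2 * σ i ^ 2)) (network B σ) := (integrable_const _).sub hi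
  simp only [nodeLogRatio]
  rw [integral_add hsub hi', integral_sub (integrable_const _) hi, integral_const, probReal_univ,
    one_smul, integral_div, integral_div, integral_sq_dotProduct_network residual,
    integral_sq_dotProduct_network hc, PiLp.norm_single, norm_eq_abs, sq_abs]
  field_simp
  ring

/-- The relative entropy of two networks is the sum over the nodes of the relative entropies of
the conditional laws of each node given its parents. -/
theorem dTV_network_le (hB : IsStrictlyLower B) (hB' : IsStrictlyLower B')
    (hσ : ∀ i, 0 < σ i) (hσ' : ∀ i, 0 < σ' i) {c : Fin n → EuclideanSpace ℝ (Fin n)}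
    (hc : ∀ i g, (1 - B').row i ⬝ᵥ netMap B σ g = ⟪c i, g⟫) {ε : ℝ} (hε : 0 ≤ ε)
    (h : ∑ i, (log (σ' i ^ 2 / σ i ^ 2) + ‖c i‖ ^ 2 / σ' i ^ 2 - 1) / 2 ≤ ε ^ 2) :
    dTV (network B σ) (network B' σ') ≤ ε := by
  have integrable (i) := integrable_nodeLogRatio (σ' := σ') hB (hc i)
  refine dTV_le_of_integral_le (integrable_finsetSum _ fun i _ => integrable i)
    (network_eq_withDensity_network hB hB' hσ hσ') hε ?_
  rw [integral_finsetSum _ fun i _ => integrable i]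
  simpa only [integral_nodeLogRatio hB (hc _) (hσ _) (hσ' _)] using h

end Networks

/-! ### Tails of the chi-square distribution -/

section ChiSquare

open Real

lemma gaussianPDFReal_mul_exp_sq_sub_one (t y : ℝ) :
    gaussianPDFReal 0 1 y * exp (t * (y ^ 2 - 1))
      = (√(2 * π))⁻¹ * exp (-t) * exp (-(1 / 2 - t) * y ^ 2) := by
  simp only [gaussianPDFReal, NNReal.coe_one, mul_one, sub_zero, mul_assoc, ← exp_add]
  ring_nf

lemma integrable_exp_sq_sub_one_gaussianReal {t : ℝ} (ht : t < 1 / 2) :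
    Integrable (fun y => exp (t * (y ^ 2 - 1))) (gaussianReal 0 1) := by
  rw [gaussianReal_of_var_ne_zero _ one_ne_zero,
    integrable_withDensity_iff (by fun_prop) (by simp [gaussianPDF])]
  simp only [toReal_gaussianPDF, mul_comm _ (gaussianPDFReal 0 1 _),
    gaussianPDFReal_mul_exp_sq_sub_one]
  exact (integrable_exp_neg_mul_sq (by linarith)).const_mul _

lemma mgf_sq_sub_one_gaussianReal {t : ℝ} (ht : t < 1 / 2) :
    mgf (fun y => y ^ 2 - 1) (gaussianReal 0 1) t = exp (-log (1 - 2 * t) / 2 - t) := by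
  have one_sub_pos : 0 < 1 - 2 * t := by linarith
  have exp_log_eq : exp (-log (1 - 2 * t) / 2) = (√(1 - 2 * t))⁻¹ := by
    rw [neg_div, exp_neg, ← log_sqrt one_sub_pos.le, exp_log (sqrt_pos.2 one_sub_pos)]
  have normalization : √(π / (1 / 2 - t)) = √(2 * π) * (√(1 - 2 * t))⁻¹ := by
    rw [← sqrt_inv, ← sqrt_mul (by positivity)]
    congr 1
    field_simp
  rw [mgf, integral_gaussianReal_eq_integral_smul one_ne_zero]
  simp only [smul_eq_mul, gaussianPDFReal_mul_exp_sq_sub_one]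
  rw [integral_const_mul, integral_gaussian, sub_eq_add_neg (-log (1 - 2 * t) / 2) t, exp_add,
    exp_log_eq, normalization]
  field_simp

variable {κ : Type*} [Fintype κ]

/-- The deviation of the sum of squares of `y` from its mean when `y` is standard Gaussian. -/
def chiSqDev (y : κ → ℝ) : ℝ := ∑ s, (y s ^ 2 - 1)

@[fun_prop]
lemma continuous_chiSqDev : Continuous (chiSqDev (κ := κ)) := by
  unfold chiSqDev
  fun_prop

lemma sum_sq_eq_chiSqDev (y : κ → ℝ) : ∑ s, y s ^ 2 = chiSqDev y + Fintype.card κ := by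
  simp [chiSqDev]

lemma exp_mul_chiSqDev (t : ℝ) (y : κ → ℝ) :
    exp (t * chiSqDev y) = ∏ s, exp (t * (y s ^ 2 - 1)) := by
  rw [chiSqDev, Finset.mul_sum, exp_sum]

lemma integrable_exp_mul_chiSqDev {t : ℝ} (ht : t < 1 / 2) :
    Integrable (fun y : κ → ℝ => exp (t * chiSqDev y)) (Measure.pi fun _ => gaussianReal 0 1) := by
  simp only [exp_mul_chiSqDev]
  exact Integrable.fintype_prod fun _ => integrable_exp_sq_sub_one_gaussianReal ht

lemma mgf_chiSqDev {t : ℝ} (ht : t < 1 / 2) :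
    mgf (chiSqDev (κ := κ)) (Measure.pi fun _ => gaussianReal 0 1) t
      = exp (Fintype.card κ * (-log (1 - 2 * t) / 2 - t)) := by
  simp only [mgf, exp_mul_chiSqDev]
  rw [integral_fintype_prod_eq_prod (fun _ y => exp (t * (y ^ 2 - 1))), Finset.prod_const,
    Finset.card_univ, exp_nat_mul, ← mgf_sq_sub_one_gaussianReal ht, mgf]

lemma neg_log_one_sub_le {t : ℝ} (ht : t ≤ 1 / 4) : -log (1 - 2 * t) / 2 - t ≤ 4 * t ^ 2 := by
  have one_sub_pos : 0 < 1 - 2 * t := by linarith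
  have inv_le : (1 - 2 * t)⁻¹ ≤ 1 + 2 * t + 8 * t ^ 2 := by
    rw [inv_le_iff_one_le_mul₀ one_sub_pos]
    nlinarith [mul_nonneg (sq_nonneg t) (by linarith : 0 ≤ 1 - 4 * t)]
  linarith [one_sub_inv_le_log_of_pos one_sub_pos]

lemma mgf_chiSqDev_le {t : ℝ} (ht : t ≤ 1 / 4) :
    mgf (chiSqDev (κ := κ)) (Measure.pi fun _ => gaussianReal 0 1) t
      ≤ exp (Fintype.card κ * (4 * t ^ 2)) := by
  rw [mgf_chiSqDev (by linarith), exp_le_exp]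
  gcongr
  exact neg_log_one_sub_le ht

lemma measureReal_le_chiSqDev_le {t : ℝ} (ht₀ : 0 ≤ t) (ht : t ≤ 1 / 4) (x : ℝ) :
    (Measure.pi fun _ : κ => gaussianReal 0 1).real {y | x ≤ chiSqDev y}
      ≤ exp (-t * x + Fintype.card κ * (4 * t ^ 2)) := by
  rw [exp_add]
  grw [measure_ge_le_exp_mul_mgf x ht₀ (integrable_exp_mul_chiSqDev (by linarith)),
    mgf_chiSqDev_le ht]

lemma measureReal_chiSqDev_le_le {t : ℝ} (ht₀ : 0 ≤ t) (x : ℝ) :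
    (Measure.pi fun _ : κ => gaussianReal 0 1).real {y | chiSqDev y ≤ -x}
      ≤ exp (-t * x + Fintype.card κ * (4 * t ^ 2)) := by
  rw [exp_add, ← neg_sq t]
  grw [measure_le_le_exp_mul_mgf (-x) (t := -t) (by linarith)
    (integrable_exp_mul_chiSqDev (by linarith)), mgf_chiSqDev_le (by linarith), neg_neg]
  exact le_of_eq (by ring_nf)

lemma measureReal_le_abs_chiSqDev_le {τ : ℝ} (hτ₀ : 0 ≤ τ) (hτ : τ ≤ 1) :
    (Measure.pi fun _ : κ => gaussianReal 0 1).real {y | τ * Fintype.card κ ≤ |chiSqDev y|}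
      ≤ 2 * exp (-(Fintype.card κ * τ ^ 2 / 16)) := by
  let μ := Measure.pi fun _ : κ => gaussianReal 0 1
  let x := τ * Fintype.card κ
  have exponent_eq : -(τ / 8) * x + Fintype.card κ * (4 * (τ / 8) ^ 2)
      = -(Fintype.card κ * τ ^ 2 / 16) := by ring
  have split_sign : {y : κ → ℝ | x ≤ |chiSqDev y|}
      ⊆ {y | x ≤ chiSqDev y} ∪ {y | chiSqDev y ≤ -x} := fun y (hy : x ≤ |chiSqDev y|) =>
    (le_abs.1 hy).imp id le_neg_of_le_neg
  calc μ.real {y | x ≤ |chiSqDev y|}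
      ≤ μ.real {y | x ≤ chiSqDev y} + μ.real {y | chiSqDev y ≤ -x} :=
        (measureReal_mono split_sign).trans (measureReal_union_le _ _)
    _ ≤ exp (-(Fintype.card κ * τ ^ 2 / 16)) + exp (-(Fintype.card κ * τ ^ 2 / 16)) := by
        rw [← exponent_eq]
        exact add_le_add (measureReal_le_chiSqDev_le (by linarith) (by linarith) x)
          (measureReal_chiSqDev_le_le (by linarith) x)
    _ = 2 * exp (-(Fintype.card κ * τ ^ 2 / 16)) := (two_mul _).symm

end ChiSquare

/-! ### Nets of the unit sphere -/

section Nets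

open Module Metric
open scoped NNReal

variable {E : Type*} [NormedAddCommGroup E] [NormedSpace ℝ E] [FiniteDimensional ℝ E]

lemma card_le_of_isSeparated {x : E} {r : ℝ} {δ : ℝ≥0} (hr : 0 ≤ r) (hδ : 0 < δ) {s : Finset E}
    (hs : ↑s ⊆ closedBall x r) (hsep : IsSeparated δ (s : Set E)) :
    (s.card : ℝ) ≤ (1 + 2 * r / δ) ^ finrank ℝ E := by
  borelize E
  let μ : Measure E := Measure.addHaar
  have hδ' : (0 : ℝ) < δ := hδ
  have disjoint_balls : (s : Set E).PairwiseDisjoint fun c => closedBall c (δ / 2) :=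
    fun c hc d hd hcd => closedBall_disjoint_closedBall <| by
      have lt_edist : (δ : ENNReal) < edist c d := hsep hc hd hcd
      rw [edist_nndist, ENNReal.coe_lt_coe, ← NNReal.coe_lt_coe, coe_nndist] at lt_edist
      linarith
  have balls_subset : ⋃ c ∈ s, closedBall c (δ / 2) ⊆ closedBall x (r + δ / 2) :=
    Set.iUnion₂_subset fun c hc => closedBall_subset_closedBall' <| by
      linarith [mem_closedBall.1 (hs hc)]
  have volume_le := measureReal_mono (μ := μ) balls_subset measure_closedBall_lt_top.ne
  rw [measureReal_biUnion_finset disjoint_balls (fun c _ => measurableSet_closedBall)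
    (fun c _ => measure_closedBall_lt_top.ne)] at volume_le
  simp only [μ.addHaar_real_closedBall' _ (half_pos hδ').le, Finset.sum_const, nsmul_eq_mul,
    μ.addHaar_real_closedBall' _ (by positivity : 0 ≤ r + δ / 2), ← mul_assoc] at volume_le
  have unitBall_pos : 0 < μ.real (closedBall 0 1) :=
    ENNReal.toReal_pos (measure_closedBall_pos _ _ one_pos).ne' measure_closedBall_lt_top.ne
  have := le_of_mul_le_mul_right volume_le unitBall_pos
  rw [← le_div_iff₀ (by positivity), ← div_pow] at this
  refine this.trans_eq (congrArg (· ^ _) ?_)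
  field_simp
  ring

lemma packingNumber_sphere_le {δ : ℝ≥0} (hδ : 0 < δ) {K : ℕ}
    (hK : (1 + 2 / δ : ℝ) ^ finrank ℝ E ≤ K) :
    packingNumber δ (sphere (0 : E) 1) ≤ K := by
  refine iSup₂_le fun C hC => iSup_le fun hsep => ?_
  by_contra! hcard
  obtain ⟨t, htC, ht⟩ := Set.exists_subset_encard_eq (Order.add_one_le_of_lt hcard)
  have htfin : t.Finite := Set.finite_of_encard_eq_coe (k := K + 1) (by simpa using ht)
  lift t to Finset E using htfin
  have card_eq : t.card = K + 1 := by
    rw [Set.encard_coe_eq_coe_finsetCard] at ht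
    exact_mod_cast ht
  have := card_le_of_isSeparated zero_le_one hδ ((htC.trans hC).trans sphere_subset_closedBall)
    (hsep.mono htC)
  rw [card_eq, mul_one] at this
  exact absurd (this.trans hK) (by simp)

variable (E) in
lemma exists_finset_isCover_sphere {δ : ℝ≥0} (hδ : 0 < δ) {K : ℕ}
    (hK : (1 + 2 / δ : ℝ) ^ finrank ℝ E ≤ K) :
    ∃ N : Finset E, ↑N ⊆ sphere (0 : E) 1 ∧ IsCover δ (sphere (0 : E) 1) N ∧ N.card ≤ K := by
  have covering_le := (coveringNumber_le_packingNumber δ _).trans (packingNumber_sphere_le hδ hK)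
  obtain ⟨N, hN, hfin, hcover, hcard⟩ :=
    exists_set_encard_eq_coveringNumber (ne_top_of_le_ne_top (ENat.natCast_ne_top K) covering_le)
  lift N to Finset E using hfin
  rw [← hcard, Set.encard_coe_eq_coe_finsetCard] at covering_le
  exact ⟨N, hN, hcover, by exact_mod_cast covering_le⟩

end Nets

section BilinForm

open Metric
open LinearMap (BilinForm)

variable {E : Type*} [NormedAddCommGroup E] [InnerProductSpace ℝ E] {A : BilinForm ℝ E}

/-- Polarization, after rescaling the two vectors to equal norms. -/
lemma abs_apply_le_of_abs_apply_self_le (hA : A.IsSymm) {R : ℝ}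
    (h : ∀ z, |A z z| ≤ R * ‖z‖ ^ 2) (x y : E) : |A x y| ≤ R * (‖x‖ * ‖y‖) := by
  rcases eq_or_ne x 0 with rfl | hx
  · simp
  rcases eq_or_ne y 0 with rfl | hy
  · simp
  have hxy : 0 < ‖x‖ * ‖y‖ := by positivity
  let u := ‖y‖ • x
  let v := ‖x‖ • y
  have polarization : 4 * (‖x‖ * ‖y‖ * A x y) = A (u + v) (u + v) - A (u - v) (u - v) := by
    simp only [u, v, map_add, map_sub, map_smul, LinearMap.add_apply, LinearMap.sub_apply,
      LinearMap.smul_apply, smul_eq_mul, hA.eq y x]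
    ring
  have parallelogram : ‖u + v‖ ^ 2 + ‖u - v‖ ^ 2 = 4 * (‖x‖ * ‖y‖) ^ 2 := by
    have := parallelogram_law_with_norm ℝ u v
    simp only [u, v, norm_smul, norm_norm] at this ⊢
    linarith
  have : ‖x‖ * ‖y‖ * |A x y| ≤ ‖x‖ * ‖y‖ * (R * (‖x‖ * ‖y‖)) := by
    rw [← abs_of_pos hxy, ← abs_mul, abs_of_pos hxy]
    have hsum := abs_le.1 (h (u + v))
    have hdiff := abs_le.1 (h (u - v))
    have bound_sum := congrArg (R * ·) parallelogram
    simp only [mul_add] at bound_sum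
    exact abs_le.2 ⟨by linarith, by linarith⟩
  exact le_of_mul_le_mul_left this hxy

variable [FiniteDimensional ℝ E]

lemma exists_forall_abs_apply_self_le (A : BilinForm ℝ E) [Nontrivial E] :
    ∃ x : E, ‖x‖ = 1 ∧ ∀ z, |A z z| ≤ |A x x| * ‖z‖ ^ 2 := by
  have hcont : Continuous fun z => |A z z| :=
    (A.toContinuousBilinearMap.continuous.clm_apply continuous_id).abs
  obtain ⟨x, hx, hmax⟩ := (isCompact_sphere (0 : E) 1).exists_isMaxOn
    (NormedSpace.sphere_nonempty.2 zero_le_one) hcont.continuousOn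
  refine ⟨x, mem_sphere_zero_iff_norm.1 hx, fun z => ?_⟩
  rcases eq_or_ne z 0 with rfl | hz
  · simp
  have apply_normalized : |A (‖z‖⁻¹ • z) (‖z‖⁻¹ • z)| = |A z z| / ‖z‖ ^ 2 := by
    simp only [map_smul, LinearMap.smul_apply, smul_eq_mul, abs_mul, abs_inv, abs_norm]
    field_simp
  rw [← div_le_iff₀ (by positivity), ← apply_normalized]
  exact hmax (by simp [norm_smul, hz])

lemma abs_apply_self_le_of_isCover (hA : A.IsSymm) {N : Set E} (hN : N ⊆ sphere 0 1)
    (hcover : IsCover (1 / 4) (sphere (0 : E) 1) N) {b : ℝ} (hb : ∀ y ∈ N, |A y y| ≤ b) (x : E) :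
    |A x x| ≤ 2 * b * ‖x‖ ^ 2 := by
  rcases subsingleton_or_nontrivial E with _ | _
  · simp [Subsingleton.elim x 0]
  obtain ⟨x₀, hx₀, hmax⟩ := exists_forall_abs_apply_self_le A
  obtain ⟨y, hyN, hdist⟩ := Set.mem_iUnion₂.1
    (hcover.subset_iUnion_closedBall (mem_sphere_zero_iff_norm.2 hx₀))
  have hy : ‖y‖ = 1 := mem_sphere_zero_iff_norm.1 (hN hyN)
  have norm_sub_le : ‖x₀ - y‖ ≤ 1 / 4 := by simpa [dist_eq_norm] using hdist
  have norm_add_le : ‖x₀ + y‖ ≤ 2 := (norm_add_le _ _).trans (by linarith)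
  have apply_eq : A x₀ x₀ = A y y + A (x₀ - y) (x₀ + y) := by
    simp only [map_add, map_sub, LinearMap.sub_apply, hA.eq y x₀]
    ring
  have : |A x₀ x₀| ≤ b + |A x₀ x₀| * (1 / 4 * 2) :=
    calc |A x₀ x₀| ≤ |A y y| + |A (x₀ - y) (x₀ + y)| := by
          rw [apply_eq]
          exact abs_add_le _ _
      _ ≤ b + |A x₀ x₀| * (‖x₀ - y‖ * ‖x₀ + y‖) :=
          add_le_add (hb y hyN) (abs_apply_le_of_abs_apply_self_le hA hmax _ _)
      _ ≤ b + |A x₀ x₀| * (1 / 4 * 2) := by gcongr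
  grw [hmax x]
  gcongr
  linarith

end BilinForm

/-! ### Empirical second moments of Gaussian samples -/

section NearIsometry

open Module Metric Real RealInnerProductSpace
open LinearMap (BilinForm)

variable {E κ : Type*} [NormedAddCommGroup E] [InnerProductSpace ℝ E] [Fintype κ]

/-- The deviation of the empirical second moments of the sample `x` from those of a standard
Gaussian vector, as a bilinear form; it is not divided by the sample size. -/
noncomputable def deviationForm (x : κ → E) : BilinForm ℝ E :=
  ∑ s, BilinForm.linMulLin (innerₗ E (x s)) (innerₗ E (x s))
    - (Fintype.card κ : ℝ) • innerₗ E

lemma deviationForm_apply (x : κ → E) (u v : E) :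
    deviationForm x u v = ∑ s, ⟪u, x s⟫ * ⟪v, x s⟫ - Fintype.card κ * ⟪u, v⟫ := by
  simp [deviationForm, real_inner_comm]

lemma deviationForm_self (x : κ → E) (u : E) :
    deviationForm x u u = ∑ s, ⟪u, x s⟫ ^ 2 - Fintype.card κ * ‖u‖ ^ 2 := by
  simp [deviationForm_apply, sq]

lemma isSymm_deviationForm (x : κ → E) : (deviationForm x).IsSymm :=
  ⟨fun u v => by simp [deviationForm_apply, mul_comm, real_inner_comm]⟩

/-- On the subspace `V`, the empirical second moments of the sample `x` are within a factor
`1 ± τ` of those of a standard Gaussian vector. -/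
def NearIsometry (V : Submodule ℝ E) (τ : ℝ) (x : κ → E) : Prop :=
  ∀ u ∈ V, |deviationForm x u u| ≤ τ * (Fintype.card κ * ‖u‖ ^ 2)

namespace NearIsometry

variable {V : Submodule ℝ E} {τ : ℝ} {x : κ → E}

lemma abs_deviationForm_le (h : NearIsometry V τ x) {u w : E} (hu : u ∈ V) (hw : w ∈ V) :
    |deviationForm x u w| ≤ τ * Fintype.card κ * (‖u‖ * ‖w‖) :=
  abs_apply_le_of_abs_apply_self_le (A := (deviationForm x).restrict V)
    ((isSymm_deviationForm x).restrict V) (fun z => (h z z.2).trans_eq (mul_assoc _ _ _).symm)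
    ⟨u, hu⟩ ⟨w, hw⟩

lemma sum_inner_sq_ge (h : NearIsometry V τ x) {u : E} (hu : u ∈ V) :
    (1 - τ) * Fintype.card κ * ‖u‖ ^ 2 ≤ ∑ s, ⟪u, x s⟫ ^ 2 := by
  have := (abs_le.1 (h u hu)).1
  rw [deviationForm_self] at this
  linarith

variable [Nonempty κ]

lemma eq_zero (h : NearIsometry V τ x) (hτ : τ < 1) {u : E} (hu : u ∈ V)
    (hux : ∀ s, ⟪u, x s⟫ = 0) : u = 0 := by
  have sq_le := h.sum_inner_sq_ge hu
  simp only [hux, zero_pow two_ne_zero, Finset.sum_const_zero] at sq_le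
  have card_pos : (0 : ℝ) < Fintype.card κ := by exact_mod_cast Fintype.card_pos
  have := nonpos_of_mul_nonpos_right sq_le (mul_pos (sub_pos.2 hτ) card_pos)
  exact norm_eq_zero.1 (pow_eq_zero_iff two_ne_zero |>.1 (this.antisymm (sq_nonneg _)))

/-- If `u` is the least-squares fit of the noise `w` by a vector orthogonal to `w`, then the
empirical second moment of `u` equals its empirical correlation with `w`, which is small. -/
lemma norm_le_of_normalEquation (h : NearIsometry V τ x) (hτ₀ : 0 ≤ τ) (hτ : τ ≤ 1 / 2)
    {u w : E} (hu : u ∈ V) (hw : w ∈ V) (huw : ⟪u, w⟫ = 0)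
    (normalEq : ∑ s, ⟪u, x s⟫ * ⟪w - u, x s⟫ = 0) : ‖u‖ ≤ 2 * τ * ‖w‖ := by
  have sum_sq_eq : ∑ s, ⟪u, x s⟫ ^ 2 = deviationForm x u w := by
    simp only [inner_sub_left, mul_sub, Finset.sum_sub_distrib, sub_eq_zero] at normalEq
    simp only [deviationForm_apply, huw, mul_zero, sub_zero, sq, normalEq]
  have norm_sq_le : (1 - τ) * Fintype.card κ * ‖u‖ ^ 2 ≤ τ * Fintype.card κ * (‖u‖ * ‖w‖) :=
    (h.sum_inner_sq_ge hu).trans <| sum_sq_eq.trans_le <|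
      (le_abs_self _).trans (h.abs_deviationForm_le hu hw)
  rcases (norm_nonneg u).eq_or_lt with hu₀ | hu₀
  · rw [← hu₀]
    positivity
  · have : (1 - τ) * ‖u‖ ≤ τ * ‖w‖ :=
      le_of_mul_le_mul_left (a := Fintype.card κ * ‖u‖) (by linarith) (by positivity)
    nlinarith

end NearIsometry

variable [FiniteDimensional ℝ E]

lemma nearIsometry_of_isCover {V : Submodule ℝ E} {N : Set V} (hN : N ⊆ sphere 0 1)
    (hcover : IsCover (1 / 4) (sphere (0 : V) 1) N) {τ : ℝ} {x : κ → E}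
    (h : ∀ y ∈ N, |chiSqDev fun s => ⟪(y : E), x s⟫| ≤ τ / 2 * Fintype.card κ) :
    NearIsometry V τ x := fun u hu => by
  have hform (y : V) (hy : y ∈ N) :
      |(deviationForm x).restrict V y y| ≤ τ / 2 * Fintype.card κ := by
    have norm_eq : ‖(y : E)‖ = 1 := mem_sphere_zero_iff_norm.1 (hN hy)
    rw [BilinForm.restrict_apply, LinearMap.domRestrict_apply, deviationForm_self, norm_eq,
      one_pow, mul_one, sum_sq_eq_chiSqDev, add_sub_cancel_right]
    exact h y hy
  refine (abs_apply_self_le_of_isCover ((isSymm_deviationForm x).restrict V) hN hcover hform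
    ⟨u, hu⟩).trans_eq ?_
  rw [Submodule.coe_norm]
  ring

variable [MeasurableSpace E] [BorelSpace E]
  {α : Type*} [Fintype α] {e : κ → α}

lemma map_inner_pi_stdGaussian (he : Function.Injective e) {c : E} (hc : ‖c‖ = 1) :
    (Measure.pi fun _ : α => stdGaussian E).map (fun g s => ⟪c, g (e s)⟫)
      = Measure.pi fun _ => gaussianReal 0 1 := by
  have hmeas : Measurable fun x : E => ⟪c, x⟫ := by fun_prop
  have indep : iIndepFun (fun s (g : α → E) => ⟪c, g (e s)⟫) (Measure.pi fun _ => stdGaussian E) :=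
    (iIndepFun_pi (X := fun _ x => ⟪c, x⟫) fun _ => hmeas.aemeasurable).precomp he
  have law (s : κ) : (Measure.pi fun _ : α => stdGaussian E).map (fun g => ⟪c, g (e s)⟫)
      = gaussianReal 0 1 := by
    have := map_inner_stdGaussian c
    rwa [← (measurePreserving_eval (fun _ : α => stdGaussian E) (e s)).map_eq,
      Measure.map_map hmeas (by fun_prop), hc, one_pow, toNNReal_one] at this
  have hmeas' (s : κ) : Measurable fun g : α → E => ⟪c, g (e s)⟫ :=
    hmeas.comp (measurable_pi_apply _)
  rw [indep.map_fun_eq_pi_map fun s => (hmeas' s).aemeasurable]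
  simp only [law]

lemma measureReal_not_nearIsometry_le (he : Function.Injective e) (V : Submodule ℝ E) {τ : ℝ}
    (hτ₀ : 0 ≤ τ) (hτ : τ ≤ 1) :
    (Measure.pi fun _ : α => stdGaussian E).real {g | ¬ NearIsometry V τ (g ∘ e)}
      ≤ 9 ^ finrank ℝ V * (2 * exp (-(Fintype.card κ * τ ^ 2 / 64))) := by
  let μ := Measure.pi fun _ : α => stdGaussian E
  obtain ⟨N, hN, hcover, hcard⟩ := exists_finset_isCover_sphere V (δ := 1 / 4) (by norm_num)
    (K := 9 ^ finrank ℝ V) (by norm_num)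
  let bad (y : V) : Set (α → E) :=
    {g | τ / 2 * Fintype.card κ ≤ |chiSqDev fun s => ⟪(y : E), g (e s)⟫|}
  have subset_bad : {g | ¬ NearIsometry V τ (g ∘ e)} ⊆ ⋃ y ∈ N, bad y := fun g hg => by
    by_contra! hcon
    simp only [Set.mem_iUnion, not_exists] at hcon
    exact hg (nearIsometry_of_isCover hN hcover fun y hy => (not_le.1 (hcon y hy)).le)
  have bad_le (y : V) (hy : y ∈ N) : μ.real (bad y) ≤ 2 * exp (-(Fintype.card κ * τ ^ 2 / 64)) := by
    have norm_eq : ‖(y : E)‖ = 1 := mem_sphere_zero_iff_norm.1 (hN hy)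
    have hmeas : Measurable fun (g : α → E) s => ⟪(y : E), g (e s)⟫ :=
      measurable_pi_lambda _ fun s =>
        (by fun_prop : Measurable fun x : E => ⟪(y : E), x⟫).comp (measurable_pi_apply _)
    have := measureReal_le_abs_chiSqDev_le (κ := κ) (τ := τ / 2) (by linarith) (by linarith)
    rw [← map_inner_pi_stdGaussian he norm_eq, map_measureReal_apply hmeas
      (measurableSet_le (by fun_prop) (by fun_prop))] at this
    exact this.trans_eq (by ring_nf)
  calc μ.real {g | ¬ NearIsometry V τ (g ∘ e)}
      ≤ ∑ y ∈ N, μ.real (bad y) :=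
        (measureReal_mono subset_bad (measure_ne_top _ _)).trans (measureReal_biUnion_finset_le _ _)
    _ ≤ N.card * (2 * exp (-(Fintype.card κ * τ ^ 2 / 64))) := by
        rw [← nsmul_eq_mul]
        exact Finset.sum_le_card_nsmul _ _ _ bad_le
    _ ≤ 9 ^ finrank ℝ V * (2 * exp (-(Fintype.card κ * τ ^ 2 / 64))) := by
        gcongr
        exact_mod_cast hcard

end NearIsometry

/-! ### The estimator in terms of rows of coefficients -/

section Rows

variable {m n : ℕ} {π : Fin n → Finset (Fin n)} {ω : Fin m → Fin n → ℝ} {i : Fin n}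

lemma dotProduct_eq_sum_coe {ι : Type*} [Fintype ι] {s : Finset ι} {a : ι → ℝ}
    (ha : ∀ j ∉ s, a j = 0) (x : ι → ℝ) : a ⬝ᵥ x = ∑ j : s, a j * x j := by
  rw [dotProduct, Finset.sum_coe_sort s fun j => a j * x j]
  exact (Finset.sum_subset (Finset.subset_univ s) fun j _ hj => by rw [ha j hj, zero_mul]).symm

lemma coefMatrix_eq_zero {j : Fin n} (hj : j ∉ π i) : coefMatrix π ω i j = 0 := by
  simp [coefMatrix, hj]

lemma one_sub_coefMatrix_dotProduct (π : Fin n → Finset (Fin n)) (ω : Fin m → Fin n → ℝ)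
    (i : Fin n) (x : Fin n → ℝ) :
    (1 - coefMatrix π ω).row i ⬝ᵥ x = x i - ∑ j : {j // j ∈ π i}, coefEst π ω i j * x j := by
  have row_eq : (1 - coefMatrix π ω).row i = Pi.single i 1 - (coefMatrix π ω).row i := by
    ext j
    simp [row, one_apply, Pi.single_apply, eq_comm]
  rw [row_eq, sub_dotProduct, single_one_dotProduct,
    dotProduct_eq_sum_coe (s := π i) (a := (coefMatrix π ω).row i) fun j => coefMatrix_eq_zero]
  simp [row, coefMatrix]

lemma varEst_eq_sum_dotProduct_sq (π : Fin n → Finset (Fin n)) (ω : Fin m → Fin n → ℝ)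
    (i : Fin n) :
    varEst π ω i = (1 / ((m - m / 2 : ℕ) : ℝ)) *
      ∑ s, ((1 - coefMatrix π ω).row i ⬝ᵥ secondHalf ω s) ^ 2 := by
  simp only [varEst, one_sub_coefMatrix_dotProduct]

lemma isUnit_gram_of_forall_eq_zero
    (h : ∀ a : Fin n → ℝ, (∀ j ∉ π i, a j = 0) → (∀ s, a ⬝ᵥ firstHalf ω s = 0) → a = 0) :
    IsUnit (gram π ω i) := by
  rw [gram, isUnit_transpose_mul_self_iff, Fintype.linearIndependent_iff]
  intro v hv j
  let a : Fin n → ℝ := fun j => if hj : j ∈ π i then v ⟨j, hj⟩ else 0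
  have a_eq_zero : a = 0 := h a (fun j hj => dif_neg hj) fun s => by
    rw [dotProduct_eq_sum_coe (s := π i) (a := a) fun j hj => dif_neg hj]
    simpa [a, design] using congrFun hv s
  simpa [a] using congrFun a_eq_zero j

lemma sum_dotProduct_mul_residual_eq_zero (hgram : IsUnit (gram π ω i)) {a : Fin n → ℝ}
    (ha : ∀ j ∉ π i, a j = 0) :
    ∑ s, (a ⬝ᵥ firstHalf ω s) * ((1 - coefMatrix π ω).row i ⬝ᵥ firstHalf ω s) = 0 := by
  have normal_equations : SolvesNormalEquations (design π ω i).col (fun s => firstHalf ω s i)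
      (coefEst π ω i) := (solvesNormalEquations_col_iff hgram).2 rfl
  simp only [dotProduct_eq_sum_coe ha, Finset.sum_mul, mul_assoc, one_sub_coefMatrix_dotProduct]
  rw [Finset.sum_comm]
  refine Finset.sum_eq_zero fun j _ => ?_
  rw [← Finset.mul_sum]
  convert mul_zero (a j)
  convert normal_equations j using 1
  simp [dotProduct, design]

end Rows

/-! ### The estimation error on nearly isometric samples -/

section Error

open Module RealInnerProductSpace

variable {m n : ℕ} {π : Fin n → Finset (Fin n)} {B : Matrix (Fin n) (Fin n) ℝ} {σ : Fin n → ℝ}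

/-- The linear functional `a` of the network, as a functional of the standard Gaussian noise. -/
noncomputable def response (B : Matrix (Fin n) (Fin n) ℝ) (σ : Fin n → ℝ) :
    (Fin n → ℝ) →ₗ[ℝ] EuclideanSpace ℝ (Fin n) :=
  (WithLp.linearEquiv 2 ℝ (Fin n → ℝ)).symm ∘ₗ ((1 - B)⁻¹ * diagonal σ).vecMulLinear

lemma inner_response (B : Matrix (Fin n) (Fin n) ℝ) (σ a : Fin n → ℝ)
    (g : EuclideanSpace ℝ (Fin n)) : ⟪response B σ a, g⟫ = a ⬝ᵥ netMap B σ g := by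
  have netMap_eq : netMap B σ g = ((1 - B)⁻¹ * diagonal σ) *ᵥ g.ofLp := by
    rw [← mulVec_mulVec, netMap]
    congr 1
    ext j
    simp [mulVec_diagonal]
  rw [netMap_eq, dotProduct_mulVec, EuclideanSpace.inner_eq_star_dotProduct, star_trivial,
    dotProduct_comm]
  rfl

lemma response_injective (hB : IsStrictlyLower B) (hσ : ∀ i, 0 < σ i) :
    Function.Injective (response B σ) := by
  have hunit : IsUnit ((1 - B)⁻¹ * diagonal σ) := by
    rw [isUnit_iff_isUnit_det, det_mul, det_nonsing_inv, hB.det_one_sub, Ring.inverse_one, one_mul,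
      det_diagonal]
    exact (Finset.prod_pos fun i _ => hσ i).ne'.isUnit
  exact (WithLp.linearEquiv 2 ℝ (Fin n → ℝ)).symm.injective.comp (vecMul_injective_of_isUnit hunit)

lemma response_row_one_sub (hB : IsStrictlyLower B) (σ : Fin n → ℝ) (i : Fin n) :
    response B σ ((1 - B).row i) = EuclideanSpace.single i (σ i) :=
  ext_inner_right ℝ fun g => (inner_response B σ _ g).trans (one_sub_dotProduct_netMap hB σ g i)

lemma IsStrictlyLower.inv_one_sub_apply_eq_zero (hB : IsStrictlyLower B) {i j : Fin n}
    (hij : j < i) : (1 - B)⁻¹ j i = 0 := by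
  have lower : (1 - B).IsLowerTriangular := fun k l (hkl : k < l) => by
    simp [hB k l hkl.le, hkl.ne]
  have : Invertible (1 - B) := invertibleOfIsUnitDet _ hB.isUnit_det_one_sub
  exact blockTriangular_inv_of_blockTriangular lower hij

lemma inner_response_single_eq_zero (hB : IsStrictlyLower B) (σ : Fin n → ℝ) {a : Fin n → ℝ}
    {i : Fin n} (ha : ∀ j, i ≤ j → a j = 0) (r : ℝ) :
    ⟪response B σ a, EuclideanSpace.single i r⟫ = 0 := by
  rw [inner_response, dotProduct]
  refine Finset.sum_eq_zero fun j _ => ?_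
  rcases le_or_gt i j with hij | hij
  · rw [ha j hij, zero_mul]
  · simp [netMap, mulVec, dotProduct, hB.inv_one_sub_apply_eq_zero hij]

/-- The linear functionals of the values of node `i` and its parents, as functionals of the
noise. -/
noncomputable def nodeSpan (π : Fin n → Finset (Fin n)) (B : Matrix (Fin n) (Fin n) ℝ)
    (σ : Fin n → ℝ) (i : Fin n) : Submodule ℝ (EuclideanSpace ℝ (Fin n)) :=
  Submodule.span ℝ ((insert i (π i)).image fun j => response B σ (Pi.single j 1))

lemma finrank_nodeSpan_le (π : Fin n → Finset (Fin n)) (B : Matrix (Fin n) (Fin n) ℝ)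
    (σ : Fin n → ℝ) (i : Fin n) : finrank ℝ (nodeSpan π B σ i) ≤ (π i).card + 1 :=
  (finrank_span_finset_le_card _).trans (Finset.card_image_le.trans (Finset.card_insert_le _ _))

lemma response_mem_nodeSpan {a : Fin n → ℝ} {i : Fin n} (ha : ∀ j ∉ insert i (π i), a j = 0) :
    response B σ a ∈ nodeSpan π B σ i := by
  rw [pi_eq_sum_univ' a, map_sum]
  refine Submodule.sum_mem _ fun j _ => ?_
  by_cases hj : j ∈ insert i (π i)
  · rw [map_smul]
    refine Submodule.smul_mem _ _ (Submodule.subset_span (Finset.mem_coe.2 ?_))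
    convert Finset.mem_image_of_mem _ hj
  · simp [ha j hj]

/-- `B` and `σ` are the parameters of a network on the graph with parent sets `π`, whose nodes are
in topological order. -/
structure IsNetworkOn (π : Fin n → Finset (Fin n)) (B : Matrix (Fin n) (Fin n) ℝ)
    (σ : Fin n → ℝ) : Prop where
  lt_of_mem : ∀ i, ∀ j ∈ π i, j < i
  eq_zero_of_notMem : ∀ i j, j ∉ π i → B i j = 0
  pos : ∀ i, 0 < σ i

lemma isStrictlyLower_of_parents (hlt : ∀ i, ∀ j ∈ π i, j < i)
    (h : ∀ i j, j ∉ π i → B i j = 0) : IsStrictlyLower B :=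
  fun i j hij => h i j fun hj => (hlt i j hj).not_ge hij

lemma IsNetworkOn.isStrictlyLower (h : IsNetworkOn π B σ) : IsStrictlyLower B :=
  isStrictlyLower_of_parents h.lt_of_mem h.eq_zero_of_notMem

lemma IsNetworkOn.isStrictlyLower_coefMatrix (h : IsNetworkOn π B σ) (ω : Fin m → Fin n → ℝ) :
    IsStrictlyLower (coefMatrix π ω) :=
  isStrictlyLower_of_parents h.lt_of_mem fun _ _ => coefMatrix_eq_zero

/-- The error of the estimated regression function of node `i`, as a functional of the noise. -/
noncomputable def coefError (π : Fin n → Finset (Fin n)) (B : Matrix (Fin n) (Fin n) ℝ)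
    (σ : Fin n → ℝ) (ω : Fin m → Fin n → ℝ) (i : Fin n) : EuclideanSpace ℝ (Fin n) :=
  response B σ ((coefMatrix π ω - B).row i)

/-- The residual of the estimated regression of node `i`, as a functional of the noise. -/
noncomputable def residual (π : Fin n → Finset (Fin n)) (B : Matrix (Fin n) (Fin n) ℝ)
    (σ : Fin n → ℝ) (ω : Fin m → Fin n → ℝ) (i : Fin n) : EuclideanSpace ℝ (Fin n) :=
  response B σ ((1 - coefMatrix π ω).row i)

namespace IsNetworkOn

lemma coefMatrix_sub_eq_zero (h : IsNetworkOn π B σ) (ω : Fin m → Fin n → ℝ) {i j : Fin n}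
    (hj : j ∉ π i) : (coefMatrix π ω - B).row i j = 0 := by
  simp [row, coefMatrix_eq_zero hj, h.eq_zero_of_notMem i j hj]

lemma residual_eq_single_sub (h : IsNetworkOn π B σ) (ω : Fin m → Fin n → ℝ) (i : Fin n) :
    residual π B σ ω i = EuclideanSpace.single i (σ i) - coefError π B σ ω i := by
  rw [← response_row_one_sub h.isStrictlyLower, coefError, ← map_sub, residual]
  congr 1
  ext j
  simp [row]

lemma inner_coefError_single (h : IsNetworkOn π B σ) (ω : Fin m → Fin n → ℝ) (i : Fin n) :
    ⟪coefError π B σ ω i, EuclideanSpace.single i (σ i)⟫ = 0 :=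
  inner_response_single_eq_zero h.isStrictlyLower σ
    (fun _ hij => h.coefMatrix_sub_eq_zero ω fun hj => (h.lt_of_mem i _ hj).not_ge hij) _

lemma norm_residual_sq (h : IsNetworkOn π B σ) (ω : Fin m → Fin n → ℝ) (i : Fin n) :
    ‖residual π B σ ω i‖ ^ 2 = σ i ^ 2 + ‖coefError π B σ ω i‖ ^ 2 := by
  rw [h.residual_eq_single_sub, norm_sub_sq_real, real_inner_comm, h.inner_coefError_single,
    PiLp.norm_single, Real.norm_eq_abs, sq_abs]
  ring

lemma norm_residual_sq_pos (h : IsNetworkOn π B σ) (ω : Fin m → Fin n → ℝ) (i : Fin n) :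
    0 < ‖residual π B σ ω i‖ ^ 2 := by
  rw [h.norm_residual_sq]
  have := h.pos i
  positivity

lemma coefError_mem_nodeSpan (h : IsNetworkOn π B σ) (ω : Fin m → Fin n → ℝ) (i : Fin n) :
    coefError π B σ ω i ∈ nodeSpan π B σ i :=
  response_mem_nodeSpan fun _ hj =>
    h.coefMatrix_sub_eq_zero ω fun hj' => hj (Finset.mem_insert_of_mem hj')

lemma single_mem_nodeSpan (h : IsNetworkOn π B σ) (i : Fin n) :
    EuclideanSpace.single i (σ i) ∈ nodeSpan π B σ i := by
  rw [← response_row_one_sub h.isStrictlyLower]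
  refine response_mem_nodeSpan fun j hj => ?_
  obtain ⟨hji, hj⟩ := not_or.1 (mt Finset.mem_insert.2 hj)
  simp [row, one_apply_ne' hji, h.eq_zero_of_notMem i j hj]

lemma residual_mem_nodeSpan (h : IsNetworkOn π B σ) (ω : Fin m → Fin n → ℝ) (i : Fin n) :
    residual π B σ ω i ∈ nodeSpan π B σ i := by
  rw [h.residual_eq_single_sub]
  exact Submodule.sub_mem _ (h.single_mem_nodeSpan i) (h.coefError_mem_nodeSpan ω i)

end IsNetworkOn

/-- The positions of the first half of `m` samples. -/
def firstIdx (m : ℕ) (s : Fin (m / 2)) : Fin m := ⟨s.1, s.2.trans_le (Nat.div_le_self m 2)⟩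

/-- The positions of the second half of `m` samples. -/
def secondIdx (m : ℕ) (s : Fin (m - m / 2)) : Fin m := ⟨m / 2 + s.1, by omega⟩

lemma firstIdx_injective (m : ℕ) : Function.Injective (firstIdx m) := fun _ _ h =>
  Fin.ext (Fin.mk.inj h)

lemma secondIdx_injective (m : ℕ) : Function.Injective (secondIdx m) := fun _ _ h =>
  Fin.ext (Nat.add_left_cancel (Fin.mk.inj h))

variable {g : Fin m → EuclideanSpace ℝ (Fin n)} {i : Fin n} {τ : ℝ}

lemma inner_response_firstIdx (a : Fin n → ℝ) (s : Fin (m / 2)) :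
    ⟪response B σ a, g (firstIdx m s)⟫ = a ⬝ᵥ firstHalf (netMap B σ ∘ g) s :=
  inner_response B σ a _

lemma varEst_eq_sum_inner_residual_sq (π : Fin n → Finset (Fin n)) (B : Matrix (Fin n) (Fin n) ℝ)
    (σ : Fin n → ℝ) (g : Fin m → EuclideanSpace ℝ (Fin n)) (i : Fin n) :
    varEst π (netMap B σ ∘ g) i = (1 / ((m - m / 2 : ℕ) : ℝ)) *
      ∑ s, ⟪residual π B σ (netMap B σ ∘ g) i, g (secondIdx m s)⟫ ^ 2 := by
  simp only [varEst_eq_sum_dotProduct_sq, residual, inner_response]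
  rfl

namespace IsNetworkOn

lemma isUnit_gram (h : IsNetworkOn π B σ) (hm : 2 ≤ m) (hτ : τ < 1)
    (near : NearIsometry (nodeSpan π B σ i) τ (g ∘ firstIdx m)) :
    IsUnit (gram π (netMap B σ ∘ g) i) := by
  have : Nonempty (Fin (m / 2)) := ⟨⟨0, by omega⟩⟩
  refine isUnit_gram_of_forall_eq_zero fun a ha hzero => ?_
  have mem : response B σ a ∈ nodeSpan π B σ i :=
    response_mem_nodeSpan fun j hj => ha j fun hj' => hj (Finset.mem_insert_of_mem hj')
  refine response_injective h.isStrictlyLower h.pos ((near.eq_zero hτ mem fun s => ?_).trans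
    (map_zero _).symm)
  exact (inner_response_firstIdx a s).trans (hzero s)

lemma norm_coefError_le (h : IsNetworkOn π B σ) (hm : 2 ≤ m) (hτ₀ : 0 ≤ τ) (hτ : τ ≤ 1 / 2)
    (near : NearIsometry (nodeSpan π B σ i) τ (g ∘ firstIdx m)) :
    ‖coefError π B σ (netMap B σ ∘ g) i‖ ≤ 2 * τ * σ i := by
  have : Nonempty (Fin (m / 2)) := ⟨⟨0, by omega⟩⟩
  set ω := netMap B σ ∘ g
  have gram_unit : IsUnit (gram π ω i) := h.isUnit_gram hm (by linarith) near
  have normalEq : ∑ s, ⟪coefError π B σ ω i, (g ∘ firstIdx m) s⟫ *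
      ⟪EuclideanSpace.single i (σ i) - coefError π B σ ω i, (g ∘ firstIdx m) s⟫ = 0 := by
    rw [← sum_dotProduct_mul_residual_eq_zero gram_unit fun j => h.coefMatrix_sub_eq_zero ω,
      ← h.residual_eq_single_sub]
    exact Finset.sum_congr rfl fun s _ =>
      congrArg₂ (· * ·) (inner_response_firstIdx _ s) (inner_response_firstIdx _ s)
  have := near.norm_le_of_normalEquation hτ₀ hτ (h.coefError_mem_nodeSpan ω i)
    (h.single_mem_nodeSpan i) (h.inner_coefError_single ω i) normalEq
  rwa [PiLp.norm_single, Real.norm_of_nonneg (h.pos i).le] at this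

lemma abs_varEst_div_sub_one_le (h : IsNetworkOn π B σ) (hm : 0 < m)
    (near : NearIsometry (nodeSpan π B σ i) τ (g ∘ secondIdx m)) :
    |varEst π (netMap B σ ∘ g) i / ‖residual π B σ (netMap B σ ∘ g) i‖ ^ 2 - 1| ≤ τ := by
  set r := residual π B σ (netMap B σ ∘ g) i with hr
  have card_pos : (0 : ℝ) < (m - m / 2 : ℕ) := Nat.cast_pos.2 (by omega)
  have r_pos : 0 < ‖r‖ := (norm_nonneg r).lt_of_ne' (sq_pos_iff.1 (h.norm_residual_sq_pos _ i))
  have dev := near r (h.residual_mem_nodeSpan _ i)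
  rw [deviationForm_self, Fintype.card_fin] at dev
  have ratio_eq : varEst π (netMap B σ ∘ g) i / ‖r‖ ^ 2 - 1 =
      (∑ s, ⟪r, (g ∘ secondIdx m) s⟫ ^ 2 - (m - m / 2 : ℕ) * ‖r‖ ^ 2) /
        ((m - m / 2 : ℕ) * ‖r‖ ^ 2) := by
    rw [varEst_eq_sum_inner_residual_sq, ← hr]
    simp only [Function.comp_apply]
    field_simp
  rwa [ratio_eq, abs_div, abs_of_pos (a := _ * ‖r‖ ^ 2) (by positivity),
    div_le_iff₀ (by positivity)]

end IsNetworkOn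

lemma log_add_inv_sub_one_le {w : ℝ} (hw : 0 < w) : Real.log w + 1 / w - 1 ≤ (w - 1) ^ 2 / w := by
  have log_le := Real.log_le_sub_one_of_pos hw
  have : (w - 1) ^ 2 / w = (w - 1) + (1 / w - 1) := by
    field_simp
    ring
  linarith

lemma log_div_add_div_sub_one_le {s r v : ℝ} (hs : 0 < s) (hr : 0 < r) (hv : 0 < v) :
    Real.log (v / s) + r / v - 1 ≤ (r / s - 1) + (v / r - 1) ^ 2 / (v / r) := by
  have log_split : Real.log (v / s) = Real.log (v / r) + Real.log (r / s) := by
    rw [← Real.log_mul (by positivity) (by positivity), div_mul_div_cancel₀ hr.ne']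
  have inv_ratio : r / v = 1 / (v / r) := (one_div_div v r).symm
  have signal_le := Real.log_le_sub_one_of_pos (div_pos hr hs)
  have noise_le := log_add_inv_sub_one_le (div_pos hv hr)
  rw [log_split, inv_ratio]
  linarith

/-- The event whose probability the theorem bounds: the estimator is well defined on the data set
`ω`, and the estimated network is within `ε` of the true one. -/
def Success (π : Fin n → Finset (Fin n)) (B : Matrix (Fin n) (Fin n) ℝ) (σ : Fin n → ℝ) (ε : ℝ)
    (ω : Fin m → Fin n → ℝ) : Prop :=
  (∀ i, IsUnit (gram π ω i)) ∧ (∀ i, 0 < sdEst π ω i) ∧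
    dTV (network B σ) (network (coefMatrix π ω) (sdEst π ω)) ≤ ε

/-- Twice the relative entropy that the estimates of node `i` contribute. -/
noncomputable def nodeEntropy (π : Fin n → Finset (Fin n)) (B : Matrix (Fin n) (Fin n) ℝ)
    (σ : Fin n → ℝ) (ω : Fin m → Fin n → ℝ) (i : Fin n) : ℝ :=
  Real.log (varEst π ω i / σ i ^ 2) + ‖residual π B σ ω i‖ ^ 2 / varEst π ω i - 1

namespace IsNetworkOn

lemma success_of_nodeEntropy_le (h : IsNetworkOn π B σ) {ε : ℝ} (hε : 0 ≤ ε)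
    {ω : Fin m → Fin n → ℝ} (hgram : ∀ i, IsUnit (gram π ω i)) (hvar : ∀ i, 0 < varEst π ω i)
    (hent : ∑ i, nodeEntropy π B σ ω i / 2 ≤ ε ^ 2) : Success π B σ ε ω := by
  have sd_pos : ∀ i, 0 < sdEst π ω i := fun i => Real.sqrt_pos.2 (hvar i)
  have sd_sq : ∀ i, sdEst π ω i ^ 2 = varEst π ω i := fun i => Real.sq_sqrt (hvar i).le
  refine ⟨hgram, sd_pos, dTV_network_le h.isStrictlyLower (h.isStrictlyLower_coefMatrix ω) h.pos
    sd_pos (fun i g => (inner_response B σ _ g).symm) hε ?_⟩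
  simpa only [nodeEntropy, residual, sd_sq] using hent

lemma nodeEntropy_le (h : IsNetworkOn π B σ) {ω : Fin m → Fin n → ℝ} (hvar : 0 < varEst π ω i) :
    nodeEntropy π B σ ω i ≤ ‖coefError π B σ ω i‖ ^ 2 / σ i ^ 2 +
      (varEst π ω i / ‖residual π B σ ω i‖ ^ 2 - 1) ^ 2 /
        (varEst π ω i / ‖residual π B σ ω i‖ ^ 2) := by
  have σ_pos := h.pos i
  have signal_eq : ‖coefError π B σ ω i‖ ^ 2 / σ i ^ 2 =
      ‖residual π B σ ω i‖ ^ 2 / σ i ^ 2 - 1 := by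
    rw [h.norm_residual_sq]
    field_simp
    ring
  rw [signal_eq]
  exact log_div_add_div_sub_one_le (pow_pos σ_pos 2) (h.norm_residual_sq_pos ω i) hvar

lemma varEst_div_ge (h : IsNetworkOn π B σ) (hm : 0 < m) (hτ : τ ≤ 1 / 2)
    (near : NearIsometry (nodeSpan π B σ i) τ (g ∘ secondIdx m)) :
    1 / 2 ≤ varEst π (netMap B σ ∘ g) i / ‖residual π B σ (netMap B σ ∘ g) i‖ ^ 2 := by
  linarith [(abs_le.1 (h.abs_varEst_div_sub_one_le hm near)).1]

lemma varEst_pos (h : IsNetworkOn π B σ) (hm : 0 < m) (hτ : τ ≤ 1 / 2)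
    (near : NearIsometry (nodeSpan π B σ i) τ (g ∘ secondIdx m)) :
    0 < varEst π (netMap B σ ∘ g) i :=
  (div_pos_iff_of_pos_right (h.norm_residual_sq_pos _ i)).1
    (one_half_pos.trans_le (h.varEst_div_ge hm hτ near))

lemma nodeEntropy_le_of_nearIsometry (h : IsNetworkOn π B σ) (hm : 2 ≤ m) (hτ₀ : 0 ≤ τ)
    (hτ : τ ≤ 1 / 2) (near₁ : NearIsometry (nodeSpan π B σ i) τ (g ∘ firstIdx m))
    (near₂ : NearIsometry (nodeSpan π B σ i) τ (g ∘ secondIdx m)) :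
    nodeEntropy π B σ (netMap B σ ∘ g) i ≤ 6 * τ ^ 2 := by
  have σ_pos := h.pos i
  have ratio_ge := h.varEst_div_ge (by omega) hτ near₂
  have ratio_near := sq_le_sq' (neg_le_of_abs_le (h.abs_varEst_div_sub_one_le (by omega) near₂))
    (le_of_abs_le (h.abs_varEst_div_sub_one_le (by omega) near₂))
  refine (h.nodeEntropy_le (h.varEst_pos (by omega) hτ near₂)).trans ?_
  have signal_le : ‖coefError π B σ (netMap B σ ∘ g) i‖ ^ 2 / σ i ^ 2 ≤ 4 * τ ^ 2 := by
    rw [div_le_iff₀ (by positivity)]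
    calc ‖coefError π B σ (netMap B σ ∘ g) i‖ ^ 2 ≤ (2 * τ * σ i) ^ 2 := by
          gcongr
          exact h.norm_coefError_le hm hτ₀ hτ near₁
      _ = 4 * τ ^ 2 * σ i ^ 2 := by ring
  have noise_le : (varEst π (netMap B σ ∘ g) i / ‖residual π B σ (netMap B σ ∘ g) i‖ ^ 2 - 1) ^ 2 /
      (varEst π (netMap B σ ∘ g) i / ‖residual π B σ (netMap B σ ∘ g) i‖ ^ 2) ≤ 2 * τ ^ 2 := by
    rw [div_le_iff₀ (by linarith)]
    nlinarith [sq_nonneg τ]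
  linarith

lemma success_of_nearIsometry (h : IsNetworkOn π B σ) {ε : ℝ} (hε : 0 ≤ ε) (hm : 2 ≤ m)
    {τ : Fin n → ℝ} (hτ₀ : ∀ i, 0 ≤ τ i) (hτ : ∀ i, τ i ≤ 1 / 2) (hτε : ∑ i, 3 * τ i ^ 2 ≤ ε ^ 2)
    (near₁ : ∀ i, NearIsometry (nodeSpan π B σ i) (τ i) (g ∘ firstIdx m))
    (near₂ : ∀ i, NearIsometry (nodeSpan π B σ i) (τ i) (g ∘ secondIdx m)) :
    Success π B σ ε (netMap B σ ∘ g) := by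
  refine h.success_of_nodeEntropy_le hε
    (fun i => h.isUnit_gram hm (by linarith [hτ i]) (near₁ i))
    (fun i => h.varEst_pos (by omega) (hτ i) (near₂ i))
    ((Finset.sum_le_sum fun i _ => ?_).trans hτε)
  linarith [h.nodeEntropy_le_of_nearIsometry hm (hτ₀ i) (hτ i) (near₁ i) (near₂ i)]

end IsNetworkOn

end Error

/-! ### The probability of success -/

section Probability

open Module

variable {m n : ℕ} {π : Fin n → Finset (Fin n)} {B : Matrix (Fin n) (Fin n) ℝ} {σ : Fin n → ℝ}
  {ε δ : ℝ}

/-- The law of the standard Gaussian noise behind `m` samples of a network with `n` nodes. -/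
noncomputable abbrev noiseLaw (m n : ℕ) : Measure (Fin m → EuclideanSpace ℝ (Fin n)) :=
  Measure.pi fun _ => stdGaussian (EuclideanSpace ℝ (Fin n))

lemma nine_pow_mul_exp_le {q : ℕ} (hq : 1 ≤ q) {L x : ℝ} (hL : 1 / 2 ≤ L)
    (hx : 9 * q * L ≤ x) : 9 ^ q * (2 * Real.exp (-x)) ≤ Real.exp (-L) / 2 := by
  have one_le_q : (1 : ℝ) ≤ q := Nat.one_le_cast.2 hq
  have base_le : (36 : ℝ) ≤ Real.exp 4 := by
    calc (36 : ℝ) ≤ 2.7 ^ 4 := by norm_num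
      _ ≤ Real.exp 1 ^ 4 := by gcongr; linarith [Real.exp_one_gt_d9]
      _ = Real.exp 4 := by rw [← Real.exp_nat_mul]; norm_num
  have pow_le : (4 : ℝ) * 9 ^ q ≤ Real.exp (4 * q) := by
    calc (4 : ℝ) * 9 ^ q ≤ 4 ^ q * 9 ^ q := by
          gcongr
          exact le_self_pow₀ (by norm_num) (by omega)
      _ = 36 ^ q := by rw [← mul_pow]; norm_num
      _ ≤ Real.exp 4 ^ q := by gcongr
      _ = Real.exp (4 * q) := by rw [← Real.exp_nat_mul, mul_comm]
  calc 9 ^ q * (2 * Real.exp (-x)) = 4 * 9 ^ q * Real.exp (-x) / 2 := by ring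
    _ ≤ Real.exp (4 * q) * Real.exp (-x) / 2 := by gcongr
    _ ≤ Real.exp (-L) / 2 := by
        rw [← Real.exp_add]
        gcongr
        nlinarith

/-- The tolerance `τᵢ` allotted to node `i`: the bound `ε²` on the relative entropy is divided
among the nodes in proportion to `pᵢ + 1`, the dimension of the space on which the samples have to
be nearly isometric. -/
noncomputable def nodeTolerance (π : Fin n → Finset (Fin n)) (ε : ℝ) (i : Fin n) : ℝ :=
  √(ε ^ 2 * ((π i).card + 1) / (24 * (n * max (avgInDegree π) 1)))

lemma nodeTolerance_nonneg (π : Fin n → Finset (Fin n)) (ε : ℝ) (i : Fin n) :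
    0 ≤ nodeTolerance π ε i :=
  Real.sqrt_nonneg _

lemma nodeTolerance_sq (π : Fin n → Finset (Fin n)) (ε : ℝ) (i : Fin n) :
    nodeTolerance π ε i ^ 2 = ε ^ 2 * ((π i).card + 1) / (24 * (n * max (avgInDegree π) 1)) :=
  Real.sq_sqrt (by positivity)

lemma sum_nodeTolerance_sq_le (π : Fin n → Finset (Fin n)) (ε : ℝ) :
    ∑ i, nodeTolerance π ε i ^ 2 ≤ ε ^ 2 / 12 := by
  set W := n * max (avgInDegree π) 1 with hW
  simp only [nodeTolerance_sq, ← hW]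
  rw [← Finset.sum_div, ← Finset.mul_sum]
  refine div_le_of_le_mul₀ (by positivity) (by positivity) ?_
  calc ε ^ 2 * ∑ i, ((π i).card + 1 : ℝ) ≤ ε ^ 2 * (2 * W) := by
        gcongr
        exact sum_card_add_one_le π
    _ = ε ^ 2 / 12 * (24 * W) := by ring

lemma nodeTolerance_le_half (hε₀ : 0 ≤ ε) (hε : ε ≤ 1) (i : Fin n) :
    nodeTolerance π ε i ≤ 1 / 2 := by
  have sq_le : nodeTolerance π ε i ^ 2 ≤ ε ^ 2 / 12 :=
    (Finset.single_le_sum (fun _ _ => sq_nonneg _) (Finset.mem_univ i)).trans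
      (sum_nodeTolerance_sq_le π ε)
  exact le_of_sq_le_sq (by nlinarith) (by norm_num)

lemma mul_log_le_mul_nodeTolerance_sq (hε : 0 < ε) {L : ℝ} (hL : 0 ≤ L)
    (hm : 50000 * (n * max (avgInDegree π) 1 / ε ^ 2) * L ≤ m) {k : ℕ} (hk : m ≤ 3 * k)
    (i : Fin n) : 9 * ((π i).card + 1 : ℕ) * L ≤ k * nodeTolerance π ε i ^ 2 / 64 := by
  have n_pos : (0 : ℝ) < n := Nat.cast_pos.2 i.pos
  set W := n * max (avgInDegree π) 1 with hW
  have W_pos : 0 < W := by positivity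
  have k_ge : 50000 / 3 * (W / ε ^ 2) * L ≤ k := by
    have : (m : ℝ) ≤ 3 * k := by exact_mod_cast hk
    linarith
  rw [nodeTolerance_sq, ← hW]
  push_cast
  calc 9 * ((π i).card + 1 : ℝ) * L ≤ 50000 / (3 * 24 * 64) * ((π i).card + 1) * L := by
        gcongr
        norm_num
    _ = 50000 / 3 * (W / ε ^ 2) * L * (ε ^ 2 * ((π i).card + 1) / (24 * W)) / 64 := by
        field_simp
    _ ≤ k * (ε ^ 2 * ((π i).card + 1) / (24 * W)) / 64 := by gcongr

lemma half_le_log_of_two_le {x : ℝ} (hx : 2 ≤ x) : 1 / 2 ≤ Real.log x := by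
  linarith [Real.log_two_gt_d9, Real.log_le_log two_pos hx]

lemma cast_ne_zero_of_two_le_div (hnδ : 2 ≤ n / δ) : (n : ℝ) ≠ 0 := fun h => by
  norm_num [h] at hnδ

lemma measureReal_not_nearIsometry_nodeSpan_le (hε₀ : 0 < ε) (hε : ε ≤ 1)
    (hnδ : 2 ≤ n / δ)
    (hm : 50000 * (n * max (avgInDegree π) 1 / ε ^ 2) * Real.log (n / δ) ≤ m) {k : ℕ}
    {e : Fin k → Fin m} (he : Function.Injective e) (hk : m ≤ 3 * k) (i : Fin n) :
    (noiseLaw m n).real {g | ¬ NearIsometry (nodeSpan π B σ i) (nodeTolerance π ε i) (g ∘ e)} ≤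
      δ / n / 2 := by
  have log_ge := half_le_log_of_two_le hnδ
  calc _ ≤ 9 ^ finrank ℝ (nodeSpan π B σ i) *
        (2 * Real.exp (-(k * nodeTolerance π ε i ^ 2 / 64))) := by
        simpa using measureReal_not_nearIsometry_le he (nodeSpan π B σ i)
          (nodeTolerance_nonneg π ε i)
          ((nodeTolerance_le_half hε₀.le hε i).trans (by norm_num))
    _ ≤ 9 ^ ((π i).card + 1) * (2 * Real.exp (-(k * nodeTolerance π ε i ^ 2 / 64))) := by
        gcongr
        · norm_num
        · exact finrank_nodeSpan_le π B σ i
    _ ≤ Real.exp (-Real.log (n / δ)) / 2 := nine_pow_mul_exp_le (by omega) log_ge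
        (mul_log_le_mul_nodeTolerance_sq hε₀ (by linarith) hm hk i)
    _ = δ / n / 2 := by rw [Real.exp_neg, Real.exp_log (by linarith), inv_div]

lemma two_le_of_sample_bound (hε₀ : 0 < ε) (hε : ε ≤ 1) (hnδ : 2 ≤ n / δ)
    (hm : 50000 * (n * max (avgInDegree π) 1 / ε ^ 2) * Real.log (n / δ) ≤ m) : 2 ≤ m := by
  have one_le_n : (1 : ℝ) ≤ n := Nat.one_le_cast.2
    (Nat.one_le_iff_ne_zero.2 (Nat.cast_ne_zero.1 (cast_ne_zero_of_two_le_div hnδ)))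
  have one_le_weight : 1 ≤ n * max (avgInDegree π) 1 / ε ^ 2 :=
    (one_le_div (by positivity)).2 ((pow_le_one₀ hε₀.le hε).trans
      (one_le_mul_of_one_le_of_one_le one_le_n (le_max_right _ _)))
  have : (2 : ℝ) ≤ m := by nlinarith [half_le_log_of_two_le hnδ]
  exact_mod_cast this

/-- Both halves of the noise are nearly isometric on the span of node `i`. -/
def NodeGood (π : Fin n → Finset (Fin n)) (B : Matrix (Fin n) (Fin n) ℝ) (σ : Fin n → ℝ) (ε : ℝ)
    (g : Fin m → EuclideanSpace ℝ (Fin n)) (i : Fin n) : Prop :=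
  NearIsometry (nodeSpan π B σ i) (nodeTolerance π ε i) (g ∘ firstIdx m) ∧
    NearIsometry (nodeSpan π B σ i) (nodeTolerance π ε i) (g ∘ secondIdx m)

lemma IsNetworkOn.success_of_nodeGood (h : IsNetworkOn π B σ) (hε₀ : 0 ≤ ε) (hε : ε ≤ 1)
    (hm : 2 ≤ m) {g : Fin m → EuclideanSpace ℝ (Fin n)} (good : ∀ i, NodeGood π B σ ε g i) :
    Success π B σ ε (netMap B σ ∘ g) := by
  refine h.success_of_nearIsometry hε₀ hm (nodeTolerance_nonneg π ε)
    (nodeTolerance_le_half hε₀ hε) ?_ (fun i => (good i).1) fun i => (good i).2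
  rw [← Finset.mul_sum]
  linarith [sum_nodeTolerance_sq_le π ε, sq_nonneg ε]

lemma measureReal_exists_not_nodeGood_le (hε₀ : 0 < ε) (hε : ε ≤ 1)
    (hnδ : 2 ≤ n / δ) (hm2 : 2 ≤ m)
    (hm : 50000 * (n * max (avgInDegree π) 1 / ε ^ 2) * Real.log (n / δ) ≤ m) :
    (noiseLaw m n).real {g | ∃ i, ¬ NodeGood π B σ ε g i} ≤ δ := by
  have node_le : ∀ i, (noiseLaw m n).real {g | ¬ NodeGood π B σ ε g i} ≤ δ / n := fun i => by
    simp only [NodeGood, not_and_or, Set.ofPred_or]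
    linarith [measureReal_union_le (μ := noiseLaw m n)
        {g | ¬ NearIsometry (nodeSpan π B σ i) (nodeTolerance π ε i) (g ∘ firstIdx m)}
        {g | ¬ NearIsometry (nodeSpan π B σ i) (nodeTolerance π ε i) (g ∘ secondIdx m)},
      measureReal_not_nearIsometry_nodeSpan_le (B := B) (σ := σ) hε₀ hε hnδ hm
        (firstIdx_injective m) (by omega) i,
      measureReal_not_nearIsometry_nodeSpan_le (B := B) (σ := σ) hε₀ hε hnδ hm
        (secondIdx_injective m) (by omega) i]
  rw [Set.ofPred_exists]
  calc _ ≤ ∑ i, (noiseLaw m n).real {g | ¬ NodeGood π B σ ε g i} := measureReal_iUnion_fintype_le _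
    _ ≤ ∑ _ : Fin n, δ / n := Finset.sum_le_sum fun i _ => node_le i
    _ = δ := by
        rw [Finset.sum_const, Finset.card_univ, Fintype.card_fin, nsmul_eq_mul,
          mul_div_cancel₀ _ (cast_ne_zero_of_two_le_div hnδ)]

theorem IsNetworkOn.one_sub_le_measureReal_success_of_two_le (h : IsNetworkOn π B σ) (hε₀ : 0 < ε)
    (hε : ε ≤ 1) (hnδ : 2 ≤ n / δ)
    (hm : 50000 * (n * max (avgInDegree π) 1 / ε ^ 2) * Real.log (n / δ) ≤ m) :
    1 - δ ≤ (noiseLaw m n).real {g | Success π B σ ε (netMap B σ ∘ g)} := by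
  have hm2 : 2 ≤ m := two_le_of_sample_bound hε₀ hε hnδ hm
  have cover : (Set.univ : Set (Fin m → EuclideanSpace ℝ (Fin n))) ⊆
      {g | Success π B σ ε (netMap B σ ∘ g)} ∪ {g | ∃ i, ¬ NodeGood π B σ ε g i} := fun g _ => by
    by_cases good : ∀ i, NodeGood π B σ ε g i
    · exact .inl (h.success_of_nodeGood hε₀.le hε hm2 good)
    · exact .inr (not_forall.1 good)
  have union_le := (measureReal_mono (μ := noiseLaw m n) cover).trans (measureReal_union_le _ _)
  rw [probReal_univ] at union_le
  linarith [measureReal_exists_not_nodeGood_le (B := B) (σ := σ) hε₀ hε hnδ hm2 hm]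

end Probability

/-! ### Small deviations of the chi-square distribution -/

section SmallDeviations

open Real

lemma sq_le_neg_log_one_sub {t : ℝ} (ht₀ : 0 ≤ t) (ht : t < 1 / 2) :
    t ^ 2 ≤ -log (1 - 2 * t) / 2 - t := by
  have series := hasSum_pow_div_log_of_abs_lt_one (x := 2 * t) (by
    rw [abs_of_nonneg] <;> linarith)
  have two_terms := sum_le_hasSum (Finset.range 2) (fun i _ => by positivity) series
  norm_num [Finset.sum_range_succ] at two_terms
  nlinarith

/-- A lower bound on the probability of `0 ≤ f` in the manner of Paley and Zygmund: the excess `a`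
of the moment generating function over `1` comes from this event, so that the Cauchy–Schwarz
inequality applies there. -/
lemma sq_le_measureReal_nonneg_mul_mgf {Ω : Type*} [MeasurableSpace Ω] {P : Measure Ω}
    [IsProbabilityMeasure P] {f : Ω → ℝ} (hf : Measurable f) {t a : ℝ} (ht : 0 ≤ t) (ha : 0 ≤ a)
    (hexp : Integrable (fun x => exp (t * f x)) P)
    (hexp₂ : Integrable (fun x => exp (2 * t * f x)) P) (hmgf : 1 + a ≤ mgf f P t) :
    a ^ 2 ≤ P.real {x | 0 ≤ f x} * mgf f P (2 * t) := by
  set s := {x | 0 ≤ f x}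
  have hs : MeasurableSet s := measurableSet_le measurable_const hf
  have sq_exp (x : Ω) : exp (t * f x) ^ 2 = exp (2 * t * f x) := by
    rw [← exp_nat_mul, Nat.cast_ofNat, mul_assoc]
  have compl_le : ∫ x in sᶜ, exp (t * f x) ∂P ≤ 1 := by
    calc ∫ x in sᶜ, exp (t * f x) ∂P ≤ ∫ _ in sᶜ, (1 : ℝ) ∂P :=
          setIntegral_mono_on hexp.integrableOn (integrable_const _).integrableOn hs.compl
            fun x (hx : ¬ 0 ≤ f x) =>
              exp_le_one_iff.2 (mul_nonpos_of_nonneg_of_nonpos ht (not_le.1 hx).le)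
      _ ≤ 1 := by
          rw [setIntegral_const, smul_eq_mul, mul_one]
          exact measureReal_le_one
  have excess_le : a ≤ ∫ x in s, exp (t * f x) ∂P := by
    rw [mgf, ← integral_add_compl hs hexp] at hmgf
    linarith
  have cauchySchwarz := sq_integral_le (μ := P.restrict s) hexp.restrict
    (by simpa only [sq_exp] using hexp₂.restrict)
  simp only [sq_exp, measureReal_restrict_apply_univ] at cauchySchwarz
  calc a ^ 2 ≤ (∫ x in s, exp (t * f x) ∂P) ^ 2 := by gcongr
    _ ≤ P.real s * ∫ x in s, exp (2 * t * f x) ∂P := cauchySchwarz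
    _ ≤ P.real s * mgf f P (2 * t) := by
        gcongr
        exact setIntegral_le_integral hexp₂ (Filter.Eventually.of_forall fun x => (exp_pos _).le)

variable {κ : Type*} [Fintype κ]

lemma prod_gaussianPDFReal_le {r : ℝ} (hr₀ : 0 < r) (hr : r ≤ 1) {y : κ → ℝ}
    (hy : 0 ≤ chiSqDev y) :
    ∏ s, gaussianPDFReal 0 (r ^ 2).toNNReal (y s) ≤ ∏ s, gaussianPDFReal 0 1 (y s) := by
  have pdf_eq (s : κ) : gaussianPDFReal 0 (r ^ 2).toNNReal (y s) = gaussianPDFReal 0 1 (y s) *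
      exp (-(log (r ^ 2) + (r ^ 2)⁻¹ - 1) / 2 - ((r ^ 2)⁻¹ - 1) / 2 * (y s ^ 2 - 1)) := by
    rw [gaussianPDFReal_eq_mul_exp one_pos hr₀ (y s) (y s), one_pow, toNNReal_one, div_one]
    congr 2
    field_simp
    ring
  have one_le_inv : 1 ≤ (r ^ 2)⁻¹ := (one_le_inv₀ (by positivity)).2 (pow_le_one₀ hr₀.le hr)
  have log_ge := one_sub_inv_le_log_of_pos (pow_pos hr₀ 2)
  simp only [pdf_eq]
  rw [Finset.prod_mul_distrib, ← exp_sum]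
  refine mul_le_of_le_one_right (Finset.prod_nonneg fun s _ => gaussianPDFReal_nonneg _ _ _) ?_
  rw [exp_le_one_iff, Finset.sum_sub_distrib, ← Finset.mul_sum, ← chiSqDev, Finset.sum_const,
    nsmul_eq_mul]
  have log_term : (Finset.univ : Finset κ).card * (-(log (r ^ 2) + (r ^ 2)⁻¹ - 1) / 2) ≤ 0 :=
    mul_nonpos_of_nonneg_of_nonpos (Nat.cast_nonneg _) (by linarith)
  have chi_term : 0 ≤ ((r ^ 2)⁻¹ - 1) / 2 * chiSqDev y := mul_nonneg (by linarith) hy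
  linarith

lemma measureReal_mul_preimage_le {r : ℝ} (hr₀ : 0 < r) (hr : r ≤ 1) {A : Set (κ → ℝ)}
    (hA : MeasurableSet A) (hdev : ∀ y ∈ A, 0 ≤ chiSqDev y) :
    (Measure.pi fun _ : κ => gaussianReal 0 1).real {y | (fun s => r * y s) ∈ A}
      ≤ (Measure.pi fun _ : κ => gaussianReal 0 1).real A := by
  have preimage_eq : (Measure.pi fun _ : κ => gaussianReal 0 1) {y | (fun s => r * y s) ∈ A}
      = (Measure.pi fun _ : κ => gaussianReal 0 (r ^ 2).toNNReal) A := by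
    rw [← map_mul_pi_gaussianReal fun _ => r, Measure.map_apply (by fun_prop) hA]
    rfl
  refine ENNReal.toReal_mono (measure_ne_top _ _) ?_
  rw [preimage_eq, pi_gaussianReal_eq_withDensity fun _ => by simpa using hr₀.ne',
    pi_gaussianReal_eq_withDensity fun _ => one_ne_zero, withDensity_apply _ hA,
    withDensity_apply _ hA]
  exact setLIntegral_mono' hA fun y hy =>
    ENNReal.ofReal_le_ofReal (prod_gaussianPDFReal_le hr₀ hr (hdev y hy))

lemma chiSqDev_mul (r : ℝ) (y : κ → ℝ) :
    chiSqDev (fun s => r * y s) = r ^ 2 * (chiSqDev y + Fintype.card κ) - Fintype.card κ := by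
  rw [← sum_sq_eq_chiSqDev, eq_sub_iff_add_eq, ← sum_sq_eq_chiSqDev, Finset.mul_sum]
  simp only [mul_pow]

/-- The vectors whose square length exceeds its mean under the standard Gaussian law, and by at most
`x`. -/
def shell (κ : Type*) [Fintype κ] (x : ℝ) : Set (κ → ℝ) := {y | 0 ≤ chiSqDev y ∧ chiSqDev y ≤ x}

lemma measurableSet_shell (x : ℝ) : MeasurableSet (shell κ x) := by
  have hdev : Measurable (chiSqDev (κ := κ)) := by fun_prop
  exact (measurableSet_le measurable_const hdev).inter (measurableSet_le hdev measurable_const)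

lemma mul_mem_shell [Nonempty κ] {t r : ℝ} {k : ℕ} (ht : 0 < t) (hr : r ^ 2 = ((1 + t) ^ k)⁻¹)
    {y : κ → ℝ} (hle : (1 + t) ^ k ≤ 1 + chiSqDev y / Fintype.card κ)
    (hlt : 1 + chiSqDev y / Fintype.card κ < (1 + t) ^ (k + 1)) :
    (fun s => r * y s) ∈ shell κ (Fintype.card κ * t) := by
  have card_pos : (0 : ℝ) < Fintype.card κ := Nat.cast_pos.2 Fintype.card_pos
  have pow_pos : 0 < (1 + t) ^ k := by positivity
  have dev_eq : chiSqDev (fun s => r * y s)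
      = Fintype.card κ * ((1 + chiSqDev y / Fintype.card κ) / (1 + t) ^ k - 1) := by
    rw [chiSqDev_mul, hr]
    field_simp
    ring
  rw [shell, Set.mem_ofPred_eq, dev_eq]
  refine ⟨mul_nonneg card_pos.le (sub_nonneg.2 ((one_le_div₀ pow_pos).2 hle)), ?_⟩
  gcongr
  rw [sub_le_iff_le_add, div_le_iff₀ pow_pos]
  rw [pow_succ] at hlt
  linarith

lemma exists_mul_mem_shell [Nonempty κ] {t x : ℝ} (ht : 0 < t) {N : ℕ}
    (hN : x < Fintype.card κ * (N * t)) {y : κ → ℝ} (hy : y ∈ shell κ x) :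
    ∃ k < N, (fun s => √((1 + t) ^ k)⁻¹ * y s) ∈ shell κ (Fintype.card κ * t) := by
  obtain ⟨dev_nonneg, dev_le⟩ := hy
  have card_pos : (0 : ℝ) < Fintype.card κ := Nat.cast_pos.2 Fintype.card_pos
  obtain ⟨k, hle, hlt⟩ := exists_nat_pow_near (x := 1 + chiSqDev y / Fintype.card κ) (y := 1 + t)
    (le_add_of_nonneg_right (by positivity)) (by linarith)
  refine ⟨k, ?_, mul_mem_shell ht (sq_sqrt (by positivity)) hle hlt⟩
  have dev_lt : chiSqDev y / Fintype.card κ < N * t := by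
    rw [div_lt_iff₀ card_pos]
    linarith
  have bernoulli := one_add_mul_le_pow (a := t) (by linarith) N
  refine (pow_lt_pow_iff_right₀ (by linarith : 1 < 1 + t)).1 ?_
  linarith

/-- The large shell is covered by `N` dilates of the small one, and contracting a shell does not
decrease its measure. -/
lemma measureReal_shell_le [Nonempty κ] {t x : ℝ} (ht : 0 < t) {N : ℕ}
    (hN : x < Fintype.card κ * (N * t)) :
    (Measure.pi fun _ : κ => gaussianReal 0 1).real (shell κ x)
      ≤ N * (Measure.pi fun _ => gaussianReal 0 1).real (shell κ (Fintype.card κ * t)) := by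
  set A := shell κ (Fintype.card κ * t)
  set r : ℕ → ℝ := fun k => √((1 + t) ^ k)⁻¹
  have r_le_one (k : ℕ) : r k ≤ 1 :=
    sqrt_le_one.2 (inv_le_one_of_one_le₀ (one_le_pow₀ (by linarith)))
  have subset_dilates : shell κ x ⊆ ⋃ k ∈ Finset.range N, {y | (fun s => r k * y s) ∈ A} := by
    intro y hy
    obtain ⟨k, hk, hmem⟩ := exists_mul_mem_shell ht hN hy
    exact Set.mem_biUnion (Finset.mem_coe.2 (Finset.mem_range.2 hk)) hmem
  calc _ ≤ ∑ k ∈ Finset.range N, (Measure.pi fun _ : κ => gaussianReal 0 1).real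
          {y | (fun s => r k * y s) ∈ A} :=
        (measureReal_mono subset_dilates (measure_ne_top _ _)).trans
          (measureReal_biUnion_finset_le _ _)
    _ ≤ ∑ _k ∈ Finset.range N, (Measure.pi fun _ : κ => gaussianReal 0 1).real A :=
        Finset.sum_le_sum fun k _ => measureReal_mul_preimage_le (sqrt_pos.2 (by positivity))
          (r_le_one k) (measurableSet_shell _) fun y hy => hy.1
    _ = _ := by rw [Finset.sum_const, Finset.card_range, nsmul_eq_mul]

lemma one_le_sqrt_card [Nonempty κ] : 1 ≤ √(Fintype.card κ : ℝ) :=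
  one_le_sqrt.2 (Nat.one_le_cast.2 Fintype.card_pos)

lemma exp_one_fourth_le : exp (1 / 4) ≤ 4 / 3 := by
  have := exp_bound_div_one_sub_of_interval (x := 1 / 4) (by norm_num) (by norm_num)
  linarith

lemma le_measureReal_chiSqDev_nonneg [Nonempty κ] :
    1 / 8192 ≤ (Measure.pi fun _ : κ => gaussianReal 0 1).real {y | 0 ≤ chiSqDev y} := by
  set M : ℝ := (Fintype.card κ : ℝ)
  set t := 1 / (8 * √M)
  have sqrt_ge : 1 ≤ √M := one_le_sqrt_card
  have t_pos : 0 < t := by positivity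
  have t_le : t ≤ 1 / 8 := one_div_le_one_div_of_le (by norm_num) (by linarith)
  have mul_t_sq : M * t ^ 2 = 1 / 64 := by
    have sq_sqrt_M : √M ^ 2 = M := sq_sqrt (Nat.cast_nonneg _)
    rw [← sq_sqrt_M]
    simp only [t]
    field_simp
    norm_num
  have mgf_ge : 1 + 1 / 64 ≤ mgf (chiSqDev (κ := κ)) (Measure.pi fun _ => gaussianReal 0 1) t := by
    rw [mgf_chiSqDev (by linarith), ← mul_t_sq, add_comm]
    grw [sq_le_neg_log_one_sub t_pos.le (by linarith), add_one_le_exp]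
  have mgf_le : mgf (chiSqDev (κ := κ)) (Measure.pi fun _ => gaussianReal 0 1) (2 * t) ≤ 4 / 3 := by
    refine (mgf_chiSqDev_le (by linarith)).trans (le_trans ?_ exp_one_fourth_le)
    exact exp_le_exp.2 (by linarith)
  have paleyZygmund := sq_le_measureReal_nonneg_mul_mgf (continuous_chiSqDev (κ := κ)).measurable
    t_pos.le (by norm_num) (integrable_exp_mul_chiSqDev (by linarith))
    (integrable_exp_mul_chiSqDev (by linarith)) mgf_ge
  nlinarith [measureReal_nonneg (μ := Measure.pi fun _ : κ => gaussianReal 0 1)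
    (s := {y | 0 ≤ chiSqDev y})]

lemma measureReal_le_chiSqDev_le_of_sqrt [Nonempty κ] :
    (Measure.pi fun _ : κ => gaussianReal 0 1).real {y | 61 * √(Fintype.card κ) ≤ chiSqDev y}
      ≤ 1 / 16384 := by
  set M : ℝ := (Fintype.card κ : ℝ)
  have sqrt_ge : 1 ≤ √M := one_le_sqrt_card
  have sq_sqrt_M : √M ^ 2 = M := sq_sqrt (Nat.cast_nonneg _)
  have exponent_eq : -(1 / (4 * √M)) * (61 * √M) + M * (4 * (1 / (4 * √M)) ^ 2) = -15 := by
    rw [← sq_sqrt_M, sqrt_sq (by positivity)]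
    field_simp
    norm_num
  calc _ ≤ exp (-(1 / (4 * √M)) * (61 * √M) + M * (4 * (1 / (4 * √M)) ^ 2)) :=
        measureReal_le_chiSqDev_le (by positivity)
          (one_div_le_one_div_of_le (by norm_num) (by linarith)) _
    _ = (exp 1 ^ 15)⁻¹ := by
        rw [exponent_eq, exp_neg, ← exp_nat_mul]
        norm_num
    _ ≤ (2 ^ 15)⁻¹ := by
        gcongr
        linarith [exp_one_gt_d9]
    _ ≤ 1 / 16384 := by norm_num

lemma le_measureReal_shell_sqrt [Nonempty κ] :
    1 / 16384 ≤ (Measure.pi fun _ : κ => gaussianReal 0 1).real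
      (shell κ (61 * √(Fintype.card κ))) := by
  have split : {y : κ → ℝ | 0 ≤ chiSqDev y} ⊆
      shell κ (61 * √(Fintype.card κ)) ∪ {y | 61 * √(Fintype.card κ) ≤ chiSqDev y} := fun y hy =>
    (le_total (chiSqDev y) _).imp (fun h => ⟨hy, h⟩) id
  have union_bound := (measureReal_mono (μ := Measure.pi fun _ : κ => gaussianReal 0 1) split
    (measure_ne_top _ _)).trans (measureReal_union_le _ _)
  linarith [le_measureReal_chiSqDev_nonneg (κ := κ), measureReal_le_chiSqDev_le_of_sqrt (κ := κ)]

lemma le_measureReal_shell [Nonempty κ] {ε : ℝ} (hε : 0 < ε)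
    (hle : Fintype.card κ * ε ^ 2 ≤ 50000) :
    Fintype.card κ * ε ^ 2 / 1200000000 ≤
      (Measure.pi fun _ : κ => gaussianReal 0 1).real (shell κ (Fintype.card κ * ε)) := by
  set M : ℝ := (Fintype.card κ : ℝ)
  set p := (Measure.pi fun _ : κ => gaussianReal 0 1).real (shell κ (M * ε))
  have sqrt_pos : 0 < √M := one_pos.trans_le one_le_sqrt_card
  have sq_sqrt_M : √M ^ 2 = M := sq_sqrt (Nat.cast_nonneg _)
  set x := √M * ε with hx
  have x_pos : 0 < x := by positivity
  have x_sq : x ^ 2 = M * ε ^ 2 := by rw [hx, mul_pow, sq_sqrt_M]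
  have x_le : x ≤ 224 := by nlinarith
  set N := ⌊61 / x⌋₊ + 1
  have lt_N : 61 / x < N := Nat.lt_succ_floor _
  have N_le : (N : ℝ) ≤ 61 / x + 1 := by
    grw [Nat.cast_succ, Nat.floor_le (by positivity)]
  have covering : (1 / 16384 : ℝ) ≤ N * p := by
    refine le_measureReal_shell_sqrt.trans (measureReal_shell_le hε ?_)
    calc 61 * √M = √M * (61 / x * x) := by field_simp
      _ < √M * (N * x) := by gcongr
      _ = √M ^ 2 * (N * ε) := by rw [hx]; ring
      _ = M * (N * ε) := by rw [sq_sqrt_M]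
  have p_ge : x / 16384 ≤ 285 * p := by
    calc x / 16384 = x * (1 / 16384) := by ring
      _ ≤ x * ((61 / x + 1) * p) := by grw [covering, N_le]
      _ = (61 + x) * p := by field_simp
      _ ≤ 285 * p := by gcongr; linarith
  rw [← x_sq]
  nlinarith

end SmallDeviations

/-! ### A single node -/

section SingleNode

open scoped RealInnerProductSpace

variable {m : ℕ} {π : Fin 1 → Finset (Fin 1)} {B : Matrix (Fin 1) (Fin 1) ℝ} {σ : Fin 1 → ℝ}
  {ε δ : ℝ}

namespace IsNetworkOn

lemma notMem_parents (h : IsNetworkOn π B σ) (i j : Fin 1) : j ∉ π i := fun hj =>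
  (h.lt_of_mem i j hj).ne (Subsingleton.elim j i)

lemma coefError_eq_zero (h : IsNetworkOn π B σ) (ω : Fin m → Fin 1 → ℝ) (i : Fin 1) :
    coefError π B σ ω i = 0 := by
  rw [coefError, show (coefMatrix π ω - B).row i = 0 from
    funext fun j => h.coefMatrix_sub_eq_zero ω (h.notMem_parents i j), map_zero]

lemma varEst_div_eq_one_add (h : IsNetworkOn π B σ) (hm : 0 < m)
    (g : Fin m → EuclideanSpace ℝ (Fin 1)) (i : Fin 1) :
    varEst π (netMap B σ ∘ g) i / ‖residual π B σ (netMap B σ ∘ g) i‖ ^ 2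
      = 1 + chiSqDev (fun s => g (secondIdx m s) 0) / (m - m / 2 : ℕ) := by
  have card_pos : (0 : ℝ) < (m - m / 2 : ℕ) := Nat.cast_pos.2 (by omega)
  have σ_pos := h.pos i
  have inner_sq (s : Fin (m - m / 2)) :
      ⟪residual π B σ (netMap B σ ∘ g) i, g (secondIdx m s)⟫ ^ 2
        = σ i ^ 2 * g (secondIdx m s) 0 ^ 2 := by
    rw [h.residual_eq_single_sub, h.coefError_eq_zero, sub_zero, EuclideanSpace.inner_single_left,
      Subsingleton.elim i 0, mul_pow, conj_trivial]
  rw [varEst_eq_sum_inner_residual_sq, h.norm_residual_sq, h.coefError_eq_zero]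
  simp only [inner_sq]
  rw [← Finset.mul_sum, sum_sq_eq_chiSqDev (fun s => g (secondIdx m s) 0), Fintype.card_fin,
    norm_zero]
  field_simp
  ring

lemma success_of_mem_shell (h : IsNetworkOn π B σ) (hm : 0 < m)
    {g : Fin m → EuclideanSpace ℝ (Fin 1)}
    (hg : (fun s => g (secondIdx m s) 0) ∈ shell (Fin (m - m / 2)) ((m - m / 2 : ℕ) * ε)) :
    Success π B σ ε (netMap B σ ∘ g) := by
  obtain ⟨dev_nonneg, dev_le⟩ := hg
  have card_pos : (0 : ℝ) < (m - m / 2 : ℕ) := Nat.cast_pos.2 (by omega)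
  set z := chiSqDev (fun s => g (secondIdx m s) 0) / (m - m / 2 : ℕ)
  have z_nonneg : 0 ≤ z := by positivity
  have z_le : z ≤ ε := (div_le_iff₀' card_pos).2 dev_le
  have ratio_eq := h.varEst_div_eq_one_add hm g
  have var_pos (i : Fin 1) : 0 < varEst π (netMap B σ ∘ g) i := by
    rw [← div_pos_iff_of_pos_right (h.norm_residual_sq_pos (netMap B σ ∘ g) i), ratio_eq]
    positivity
  refine h.success_of_nodeEntropy_le (z_nonneg.trans z_le)
    (fun i => isUnit_gram_of_forall_eq_zero fun a ha _ => funext fun j =>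
      ha j (h.notMem_parents i j)) var_pos ?_
  have entropy_le := h.nodeEntropy_le (var_pos 0)
  rw [h.coefError_eq_zero, norm_zero, ratio_eq, add_sub_cancel_left, zero_pow two_ne_zero,
    zero_div, zero_add] at entropy_le
  rw [Fin.sum_univ_one]
  calc nodeEntropy π B σ (netMap B σ ∘ g) 0 / 2 ≤ z ^ 2 / (1 + z) / 2 := by gcongr
    _ ≤ z ^ 2 := by
        rw [div_div]
        exact div_le_self (sq_nonneg z) (by linarith)
    _ ≤ ε ^ 2 := by gcongr

lemma le_measureReal_success_single (h : IsNetworkOn π B σ) (hε : 0 < ε) (hm : 0 < m)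
    (hle : m * ε ^ 2 ≤ 50000) :
    m * ε ^ 2 / 2400000000 ≤ (noiseLaw m 1).real {g | Success π B σ ε (netMap B σ ∘ g)} := by
  have : Nonempty (Fin (m - m / 2)) := ⟨⟨0, by omega⟩⟩
  have half_le : (m : ℝ) / 2 ≤ (m - m / 2 : ℕ) := by
    have : (m : ℝ) ≤ 2 * (m - m / 2 : ℕ) := mod_cast (by omega : m ≤ 2 * (m - m / 2))
    linarith
  have card_le : ((m - m / 2 : ℕ) : ℝ) ≤ m := mod_cast Nat.sub_le _ _
  have shell_ge := le_measureReal_shell (κ := Fin (m - m / 2)) hε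
    (by grw [Fintype.card_fin, card_le]; exact hle)
  have norm_eq : ‖EuclideanSpace.single (0 : Fin 1) (1 : ℝ)‖ = 1 := by simp
  rw [Fintype.card_fin, ← map_inner_pi_stdGaussian (secondIdx_injective m) norm_eq,
    map_measureReal_apply (by fun_prop) (measurableSet_shell _)] at shell_ge
  calc m * ε ^ 2 / 2400000000 = m / 2 * ε ^ 2 / 1200000000 := by ring
    _ ≤ (m - m / 2 : ℕ) * ε ^ 2 / 1200000000 := by gcongr
    _ ≤ _ := shell_ge.trans (measureReal_mono (fun g hg => ?_) (measure_ne_top _ _))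
  refine h.success_of_mem_shell hm ?_
  simpa [EuclideanSpace.inner_single_left] using hg

lemma avgInDegree_eq_zero (h : IsNetworkOn π B σ) : avgInDegree π = 0 := by
  simp [avgInDegree, Finset.eq_empty_of_forall_notMem (h.notMem_parents 0)]

lemma one_sub_le_measureReal_success_single (h : IsNetworkOn π B σ) (hε₀ : 0 < ε) (hε : ε ≤ 1)
    (hδ : 1 / 2 ≤ δ) (hδ₁ : δ < 1) (hm : 2400000000 * (1 - δ) ≤ m * ε ^ 2) :
    1 - δ ≤ (noiseLaw m 1).real {g | Success π B σ ε (netMap B σ ∘ g)} := by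
  rcases le_or_gt (m * ε ^ 2) 50000 with few | many
  · have m_pos : 0 < m := by
      rw [← Nat.cast_pos (α := ℝ), ← mul_pos_iff_of_pos_right (pow_pos hε₀ 2)]
      linarith
    linarith [h.le_measureReal_success_single hε₀ m_pos few]
  · have log_le : Real.log ((1 : ℕ) / (1 / 2)) ≤ 1 := by
      norm_num
      linarith [Real.log_two_lt_d9]
    have half_le := h.one_sub_le_measureReal_success_of_two_le (m := m) (δ := 1 / 2) hε₀ hε
      (by norm_num) (by
        rw [h.avgInDegree_eq_zero, max_eq_right zero_le_one]
        grw [log_le]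
        rw [Nat.cast_one, mul_one, mul_one, mul_one_div, div_le_iff₀ (by positivity)]
        exact many.le)
    linarith

end IsNetworkOn

end SingleNode

/-! ### Sample complexity -/

section SampleComplexity

variable {m n : ℕ} {π : Fin n → Finset (Fin n)} {B : Matrix (Fin n) (Fin n) ℝ} {σ : Fin n → ℝ}
  {ε δ : ℝ}

namespace IsNetworkOn

theorem one_sub_le_measureReal_success (h : IsNetworkOn π B σ) (hε₀ : 0 < ε) (hε : ε ≤ 1)
    (hδ₀ : 0 < δ) (hδ : δ < 1)
    (hm : 2400000000 * (n * max (avgInDegree π) 1 / ε ^ 2) * Real.log (n / δ) ≤ m) :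
    1 - δ ≤ (noiseLaw m n).real {g | Success π B σ ε (netMap B σ ∘ g)} := by
  rcases le_or_gt 2 (n / δ) with two_le | lt_two
  · refine h.one_sub_le_measureReal_success_of_two_le hε₀ hε two_le (le_trans ?_ hm)
    have log_nonneg : 0 ≤ Real.log (n / δ) := Real.log_nonneg (by linarith)
    gcongr
    norm_num
  rw [div_lt_iff₀ hδ₀] at lt_two
  have n_lt : n < 2 := by
    rw [← Nat.cast_lt (α := ℝ), Nat.cast_ofNat]
    linarith
  interval_cases n
  · have success (g : Fin m → EuclideanSpace ℝ (Fin 0)) : Success π B σ ε (netMap B σ ∘ g) :=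
      h.success_of_nodeEntropy_le hε₀.le (fun i => i.elim0) (fun i => i.elim0)
        (by simpa using sq_nonneg ε)
    simp only [success, Set.ofPred_true, probReal_univ]
    linarith
  · have log_ge : 1 - δ ≤ Real.log (1 / δ) := by
      rw [one_div, Real.log_inv]
      linarith [Real.log_le_sub_one_of_pos hδ₀]
    rw [h.avgInDegree_eq_zero, max_eq_right zero_le_one, Nat.cast_one, mul_one, mul_one_div,
      div_mul_eq_mul_div, div_le_iff₀ (by positivity)] at hm
    rw [Nat.cast_one] at lt_two
    exact h.one_sub_le_measureReal_success_single hε₀ hε (by linarith) hδ (by linarith)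

end IsNetworkOn

lemma pi_network_eq_map (m : ℕ) (B : Matrix (Fin n) (Fin n) ℝ) (σ : Fin n → ℝ) :
    (Measure.pi fun _ : Fin m => network B σ) = (noiseLaw m n).map (netMap B σ ∘ ·) := by
  simp only [network_eq_map]
  exact (Measure.pi_map_pi fun _ => (continuous_netMap B σ).aemeasurable).symm

lemma ofReal_le_pi_network {p : ℝ}
    (h : p ≤ (noiseLaw m n).real {g | Success π B σ ε (netMap B σ ∘ g)}) :
    ENNReal.ofReal p ≤ (Measure.pi fun _ : Fin m => network B σ) {ω | Success π B σ ε ω} := by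
  have hmeas : Measurable fun g : Fin m → EuclideanSpace ℝ (Fin n) => netMap B σ ∘ g :=
    measurable_pi_lambda _ fun s => (continuous_netMap B σ).measurable.comp (measurable_pi_apply s)
  rw [pi_network_eq_map]
  exact (ENNReal.ofReal_le_of_le_toReal h).trans (Measure.le_map_apply hmeas.aemeasurable _)

end SampleComplexity
end GaussBN

/-- Learning a Gaussian Bayesian network by node-wise least squares: the sample complexity, and
the number of arithmetic operations that computing the estimator takes. -/
theorem stmt_7 : ∃ C : ℝ, 0 < C ∧
    -- sample complexity
    (∀ (ε δ : ℝ), 0 < ε → ε < 1 → 0 < δ → δ < 1 →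
      ∀ (n d : ℕ) (π : Fin n → Finset (Fin n)),
        (∀ i, ∀ j ∈ π i, j < i) →
        (∀ i, (π i).card ≤ d) →
        ∀ (B : Matrix (Fin n) (Fin n) ℝ) (σ : Fin n → ℝ),
          (∀ i j, j ∉ π i → B i j = 0) →
          (∀ i, 0 < σ i) →
          ∀ m : ℕ,
            C * ((n : ℝ) * max (GaussBN.avgInDegree π) 1 / ε ^ 2) * Real.log ((n : ℝ) / δ)
              ≤ (m : ℝ) →
            ENNReal.ofReal (1 - δ) ≤
              (MeasureTheory.Measure.pi fun _ : Fin m => GaussBN.network B σ)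
                {ω | (∀ i, IsUnit (GaussBN.gram π ω i)) ∧
                     (∀ i, 0 < GaussBN.sdEst π ω i) ∧
                     GaussBN.dTV (GaussBN.network B σ)
                       (GaussBN.network (GaussBN.coefMatrix π ω) (GaussBN.sdEst π ω)) ≤ ε}) ∧
    -- running time
    (∀ (n d : ℕ) (π : Fin n → Finset (Fin n)),
      (∀ i, ∀ j ∈ π i, j < i) →
      (∀ i, (π i).card ≤ d) →
      ∀ m : ℕ, 1 ≤ m →
        ∃ (prog : List (GaussBN.Instr (Fin m × Fin n)))
          (coefOut : ∀ i : Fin n, {j // j ∈ π i} → GaussBN.Operand (Fin m × Fin n))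
          (varOut : Fin n → GaussBN.Operand (Fin m × Fin n)),
          GaussBN.ComputesEstimator π prog coefOut varOut ∧
          (prog.length : ℝ) ≤
            C * (m : ℝ) * ((n : ℝ) * max (GaussBN.avgInDegree π) 1) * max (d : ℝ) 1) := by
  refine ⟨2400000000, by norm_num, ?_, ?_⟩
  · intro ε δ hε hε1 hδ hδ1 n d π hlt _ B σ hπ hσ m hm
    have hnet : GaussBN.IsNetworkOn π B σ := ⟨hlt, hπ, hσ⟩
    exact GaussBN.ofReal_le_pi_network
      (hnet.one_sub_le_measureReal_success hε hε1.le hδ hδ1 hm)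
  · intro n d π _ hd m hm
    obtain ⟨prog, coefOut, varOut, hprog, hlen⟩ := GaussBN.exists_computesEstimator hm π
    refine ⟨prog, coefOut, varOut, hprog, (Nat.cast_le.2 hlen).trans ?_⟩
    grw [GaussBN.sum_nodeCost_le hm hd]
    gcongr
    norm_num
end
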